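/- arXiv:1512.01186 — 6 statements merged into one kernel-verified Lean document; each statement's English description precedes it below -/
import Mathlib

section
/- Functional equation of the Mordell integral: let x, τ be complex numbers with Re(τ) > 0. Then Φ(x, τ) = −(e^{iπ(1/4 − x²/τ)}/√τ)·conj( Φ( −conj(x)/conj(τ) , 1/conj(τ) ) ), where conj denotes complex conjugation and √τ denotes the principal branch of the square root. -/
open scoped Real
open MeasureTheory Set Complex

/-- Integral along the straight line `t ↦ c + e^{iθ} t`, `t ∈ ℝ`. -/
noncomputable def lineInt (c θ : ℝ) (f : ℂ → ℂ) : ℂ :=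
  ∫ t : ℝ, f ((c : ℂ) + Complex.exp ((θ : ℂ) * Complex.I) * (t : ℂ)) *
    Complex.exp ((θ : ℂ) * Complex.I)

/-- The Mordell integral `Φ(x, τ)`, the path being the straight line of slope 1
crossing the real axis at `c ∈ (0, 1)`. -/
noncomputable def mordellPhi (x τ : ℂ) (c : ℝ) : ℂ :=
  lineInt c (π/4) (fun u =>
    Complex.exp ((π : ℂ) * Complex.I * τ * u ^ 2 + 2 * (π : ℂ) * Complex.I * x * u) /
      (Complex.exp (2 * (π : ℂ) * Complex.I * u) - 1))


open Filter Topology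

lemma integrable_of_expBound (k : ℝ → ℂ) (hk : Continuous k) (C δ R : ℝ) (hδ : 0 < δ)
    (hb : ∀ x, R ≤ |x| → ‖k x‖ ≤ C * Real.exp (-δ * |x|)) : Integrable k := by
  refine hk.locallyIntegrable.integrable_of_isBigO_atBot_atTop
    (g := fun x => Real.exp (δ * x)) (g' := fun x => Real.exp (-δ * x)) ?_ ?_ ?_ ?_
  · refine Asymptotics.IsBigO.of_bound C ?_
    filter_upwards [eventually_le_atBot (-R), eventually_le_atBot 0] with x hx hx0
    have h1 : |x| = -x := abs_of_nonpos hx0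
    have := hb x (by rw [h1]; linarith)
    rw [h1] at this
    simpa [Real.norm_eq_abs, abs_of_pos (Real.exp_pos _)] using this
  · exact ⟨Iic 0, Iic_mem_atBot 0, integrableOn_exp_mul_Iic hδ 0⟩
  · refine Asymptotics.IsBigO.of_bound C ?_
    filter_upwards [eventually_ge_atTop R, eventually_ge_atTop 0] with x hx hx0
    have h1 : |x| = x := abs_of_nonneg hx0
    have := hb x (by rw [h1]; linarith)
    rw [h1] at this
    simpa [Real.norm_eq_abs, abs_of_pos (Real.exp_pos _)] using this
  · exact ⟨Ioi 0, Ioi_mem_atTop 0, exp_neg_integrableOn_Ioi 0 hδ⟩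

lemma strip_shift (h : ℂ → ℂ) (b : ℝ) (hb0 : 0 ≤ b)
    (hd : ∀ z : ℂ, 0 ≤ z.im → z.im ≤ b → DifferentiableAt ℂ h z) (C δ R : ℝ) (hδ : 0 < δ)
    (hb : ∀ z : ℂ, 0 ≤ z.im → z.im ≤ b → R ≤ |z.re| → ‖h z‖ ≤ C * Real.exp (-δ * |z.re|)) :
    ∫ x : ℝ, h x = ∫ x : ℝ, h (x + b * I) := by
  have hint : ∀ y : ℝ, 0 ≤ y → y ≤ b → Integrable (fun x : ℝ => h (x + y * I)) := by
    intro y hy hyb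
    refine integrable_of_expBound _ ?_ C δ R hδ ?_
    · rw [continuous_iff_continuousAt]
      intro x
      have h1 : ContinuousAt h ((x : ℂ) + y * I) :=
        (hd _ (by simpa using hy) (by simpa using hyb)).continuousAt
      exact ContinuousAt.comp (f := fun x : ℝ => (x : ℂ) + y * I) h1 (by fun_prop)
    · intro x hx
      simpa using hb (x + y * I) (by simpa using hy) (by simpa using hyb) (by simpa using hx)
  have h0 := intervalIntegral_tendsto_integral (hint 0 le_rfl hb0)
    tendsto_neg_atTop_atBot tendsto_id
  have h1 := intervalIntegral_tendsto_integral (hint b hb0 le_rfl)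
    tendsto_neg_atTop_atBot tendsto_id
  have hvert : ∀ T : ℝ → ℝ, (∀ r, |T r| = |r|) →
      Tendsto (fun r : ℝ => I • ∫ y in (0:ℝ)..b, h (T r + y * I)) atTop (𝓝 0) := by
    intro T hT
    have hlim : Tendsto (fun r : ℝ => C * Real.exp (-δ * r) * |b - 0|) atTop (𝓝 0) := by
      have : Tendsto (fun r : ℝ => Real.exp (-δ * r)) atTop (𝓝 0) := by
        apply Real.tendsto_exp_atBot.comp
        exact tendsto_id.const_mul_atTop_of_neg (by linarith)
      simpa using (this.const_mul C).mul_const |b - 0|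
    refine squeeze_zero_norm' ?_ hlim
    filter_upwards [eventually_ge_atTop R, eventually_ge_atTop 0] with r hr hr0
    rw [norm_smul, norm_I, one_mul]
    refine intervalIntegral.norm_integral_le_of_norm_le_const ?_
    intro y hy
    rw [uIoc_of_le hb0] at hy
    have := hb (T r + y * I) (by simpa using hy.1.le) (by simpa using hy.2)
      (by simpa [hT, abs_of_nonneg hr0] using hr)
    simpa [hT, abs_of_nonneg hr0] using this
  have hv1 := hvert (fun r => r) (fun r => rfl)
  have hv2 := hvert (fun r => -r) (fun r => abs_neg r)
  have hrect : ∀ r : ℝ, ((((∫ x in (-r)..r, h (x + (0:ℝ) * I)) - ∫ x in (-r)..r, h (x + b * I))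
      + I • ∫ y in (0:ℝ)..b, h ((r:ℝ) + y * I)) - I • ∫ y in (0:ℝ)..b, h ((-r : ℝ) + y * I)) = 0 := by
    intro r
    have := Complex.integral_boundary_rect_eq_zero_of_differentiableOn h
      ((-r : ℝ) + (0:ℝ) * I) ((r : ℝ) + b * I) ?_
    · simpa using this
    · intro z hz
      have hz2 := hz.2
      simp only [mem_preimage] at hz2
      rw [uIcc_of_le (by simpa using hb0)] at hz2
      exact (hd z (by simpa using hz2.1) (by simpa using hz2.2)).differentiableWithinAt
  have hfin := ((h0.sub h1).add hv1).sub hv2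
  simp only [id] at hfin
  have h2 : Tendsto (fun _ : ℝ => (0:ℂ)) atTop
      (𝓝 ((∫ x : ℝ, h (x + (0:ℝ) * I)) - (∫ x : ℝ, h (x + b * I)) + 0 - 0)) := by
    refine hfin.congr ?_
    intro r
    exact hrect r
  have h3 := tendsto_nhds_unique h2 tendsto_const_nhds
  simp only [ofReal_zero, zero_mul, add_zero, sub_zero] at h3
  exact sub_eq_zero.mp h3

/-- The direction `e^{iπ/4}`. -/
noncomputable def om : ℂ := Complex.exp (((π/4 : ℝ) : ℂ) * Complex.I)

lemma om_eq : om = ((√2/2 : ℝ) : ℂ) + ((√2/2 : ℝ) : ℂ) * I := by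
  unfold om
  rw [Complex.exp_mul_I, ← Complex.ofReal_cos, ← Complex.ofReal_sin, Real.cos_pi_div_four,
    Real.sin_pi_div_four]

lemma om_re : om.re = √2/2 := by rw [om_eq]; simp
lemma om_im : om.im = √2/2 := by rw [om_eq]; simp

lemma rr : (√2/2 : ℝ) * (√2/2) = 1/2 := by
  have := Real.mul_self_sqrt (show (0:ℝ) ≤ 2 by norm_num)
  nlinarith

lemma om_conj_mul : om * (starRingEnd ℂ) om = 1 := by
  rw [Complex.mul_conj, Complex.normSq_apply, om_re, om_im, rr]; norm_num

lemma om_sq : om ^ 2 = I := by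
  apply Complex.ext
  · simp [sq, om_re, om_im]
  · have := rr
    simp [sq, om_re, om_im]; linarith

/-- The Fourier kernel. -/
noncomputable def fK (v u : ℂ) : ℂ :=
  Complex.exp (2 * (π : ℂ) * I * u * v) / (Complex.exp (2 * (π : ℂ) * I * u) - 1)

lemma r_pos : (0:ℝ) < √2/2 := by positivity

lemma den_zero (c : ℝ) (hc : 0 < c) (hc' : c < 1) (z : ℂ) (h0 : 0 ≤ z.im) (h1 : z.im ≤ √2/2)
    (h : Complex.exp (2 * (π : ℂ) * I * (c + om * z)) - 1 = 0) : c + om * z = 0 := by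
  rw [sub_eq_zero, Complex.exp_eq_one_iff] at h
  obtain ⟨n, hn⟩ := h
  have hu : (c : ℂ) + om * z = n := by
    have h2 : (2 * (π : ℂ) * I) ≠ 0 := Complex.two_pi_I_ne_zero
    apply mul_left_cancel₀ h2
    rw [hn]; ring
  have hre := congrArg Complex.re hu
  have him := congrArg Complex.im hu
  simp [om_re, om_im] at hre him
  have hr := r_pos
  have hrr := rr
  set r := √2/2 with hrdef
  have hxy : z.re = - z.im := by
    have : r * (z.re + z.im) = 0 := by linarith
    rcases mul_eq_zero.mp this with h | h
    · exact absurd h hr.ne'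
    · linarith
  rw [hxy] at hre
  have hlt : (n : ℝ) < 1 := by nlinarith
  have hgt : (-1 : ℝ) < n := by nlinarith
  have hn0 : n = 0 := by
    have a1 : n < 1 := by exact_mod_cast hlt
    have a2 : -1 < n := by exact_mod_cast hgt
    omega
  rw [hu, hn0]; simp

lemma den_ne_real (c : ℝ) (hc : 0 < c) (hc' : c < 1) (t : ℝ) :
    Complex.exp (2 * (π : ℂ) * I * (c + om * t)) - 1 ≠ 0 := by
  intro h
  have := den_zero c hc hc' t (by simp) (by simpa using r_pos.le) h
  have hre := congrArg Complex.re this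
  have him := congrArg Complex.im this
  simp [om_re, om_im] at hre him
  rw [him] at hre
  simp at hre
  linarith

lemma base_bound (a : ℝ) (δ : ℝ) (hδa : δ ≤ a) (hδa' : δ ≤ 1 - a) (u : ℂ)
    (hq : 1 ≤ |2 * π * u.im|) :
    ‖fK a u‖ ≤ 2 * Real.exp (-δ * |2 * π * u.im|) := by
  unfold fK
  set q := 2 * π * u.im with hqdef
  have hn : ‖Complex.exp (2 * (π : ℂ) * I * u * a)‖ = Real.exp (-a * q) := by
    rw [Complex.norm_exp]; congr 1; simp [hqdef]; ring
  have hd : ‖Complex.exp (2 * (π : ℂ) * I * u)‖ = Real.exp (-q) := by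
    rw [Complex.norm_exp]; congr 1; simp [hqdef]
  have e1 : (2:ℝ) ≤ Real.exp 1 := by have := Real.add_one_le_exp (1:ℝ); linarith
  rw [norm_div, hn]
  rcases le_total 0 q with h0 | h0
  · rw [abs_of_nonneg h0] at hq ⊢
    have h1 : 1 - Real.exp (-q) ≤ ‖Complex.exp (2 * (π : ℂ) * I * u) - 1‖ := by
      have := norm_sub_norm_le 1 (Complex.exp (2 * (π : ℂ) * I * u))
      rw [norm_sub_rev, hd] at this
      simpa using this
    have h2 : Real.exp (-q) ≤ 1/2 := by
      rw [Real.exp_neg, one_div]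
      exact inv_anti₀ (by norm_num) (e1.trans (Real.exp_le_exp.mpr hq))
    have h3 : (1/2 : ℝ) ≤ ‖Complex.exp (2 * (π : ℂ) * I * u) - 1‖ := by linarith
    rw [div_le_iff₀ (by linarith)]
    have h4 : Real.exp (-a * q) ≤ Real.exp (-δ * q) := Real.exp_le_exp.mpr (by nlinarith)
    nlinarith [Real.exp_pos (-δ * q)]
  · rw [abs_of_nonpos h0] at hq ⊢
    have h1 : Real.exp (-q) - 1 ≤ ‖Complex.exp (2 * (π : ℂ) * I * u) - 1‖ := by
      have := norm_sub_norm_le (Complex.exp (2 * (π : ℂ) * I * u)) 1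
      rw [hd] at this
      simpa using this
    have h2 : 2 ≤ Real.exp (-q) := e1.trans (Real.exp_le_exp.mpr hq)
    have h3 : Real.exp (-q) / 2 ≤ ‖Complex.exp (2 * (π : ℂ) * I * u) - 1‖ := by linarith
    rw [div_le_iff₀ (by linarith)]
    have h4 : Real.exp (-a * q) ≤ Real.exp (-δ * -q) * Real.exp (-q) := by
      rw [← Real.exp_add]; exact Real.exp_le_exp.mpr (by nlinarith)
    nlinarith [Real.exp_pos (-δ * -q)]

lemma fK_bound (c : ℝ) (hc : 0 < c) (hc' : c < 1) (a s : ℝ) (ha : 0 < a) (ha' : a < 1) (z : ℂ)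
    (h0 : 0 ≤ z.im) (h1 : z.im ≤ √2/2) (hx : 2 ≤ |z.re|) :
    ‖fK (a + (starRingEnd ℂ) om * s) (c + om * z)‖ ≤
      (Real.exp (2 * π * |s| * 2) * (2 * Real.exp (min a (1 - a)))) *
        Real.exp (-(min a (1 - a)) * |z.re|) := by
  set δ := min a (1 - a) with hδ
  have hδ0 : 0 < δ := lt_min ha (by linarith)
  have hr := r_pos
  have hrr := rr
  set r := √2/2 with hrdef
  have hr1 : r < 1 := by nlinarith
  have hr2 : 1/2 < r := by nlinarith
  have him : ((c:ℂ) + om * z).im = r * (z.re + z.im) := by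
    simp [om_re, om_im]; ring
  have hsplit : fK (a + (starRingEnd ℂ) om * s) (c + om * z) =
      Complex.exp (2 * (π : ℂ) * I * s * (c * (starRingEnd ℂ) om + z)) * fK a (c + om * z) := by
    unfold fK
    rw [← mul_div_assoc, ← Complex.exp_add]
    congr 2
    linear_combination (2 * (π : ℂ) * I * s * z) * om_conj_mul
  rw [hsplit, norm_mul]
  have hE : ‖Complex.exp (2 * (π : ℂ) * I * s * (c * (starRingEnd ℂ) om + z))‖ ≤
      Real.exp (2 * π * |s| * 2) := by
    rw [Complex.norm_exp]
    apply Real.exp_le_exp.mpr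
    have : (2 * (π : ℂ) * I * s * (c * (starRingEnd ℂ) om + z)).re =
        2 * π * (s * (c * r - z.im)) := by
      simp [om_re, om_im]; ring
    rw [this, mul_assoc (2 * π)]
    apply mul_le_mul_of_nonneg_left _ (by positivity)
    refine (le_abs_self _).trans ?_
    rw [abs_mul]
    apply mul_le_mul_of_nonneg_left _ (abs_nonneg s)
    rw [abs_le]; constructor <;> nlinarith
  have hq : |z.re| - 1 ≤ |2 * π * ((c:ℂ) + om * z).im| := by
    rw [him, show 2 * π * (r * (z.re + z.im)) = (2 * π * r) * (z.re + z.im) by ring, abs_mul,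
      abs_of_pos (by positivity : 0 < 2 * π * r)]
    have h2 : |z.re| - 1 ≤ |z.re + z.im| := by
      have := abs_sub_abs_le_abs_sub z.re (-z.im)
      rw [abs_neg, abs_of_nonneg h0, sub_neg_eq_add] at this
      linarith
    have h3 : 1 ≤ 2 * π * r := by nlinarith [Real.pi_gt_three]
    nlinarith [abs_nonneg (z.re + z.im)]
  have hB := base_bound a δ (min_le_left _ _) (min_le_right _ _) (c + om * z) (by linarith)
  have hB2 : ‖fK a (c + om * z)‖ ≤ (2 * Real.exp δ) * Real.exp (-δ * |z.re|) := by
    refine hB.trans ?_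
    rw [mul_assoc 2 (Real.exp δ), ← Real.exp_add]
    apply mul_le_mul_of_nonneg_left _ (by norm_num)
    apply Real.exp_le_exp.mpr
    nlinarith
  calc _ ≤ Real.exp (2 * π * |s| * 2) * ((2 * Real.exp δ) * Real.exp (-δ * |z.re|)) :=
        mul_le_mul hE hB2 (norm_nonneg _) (Real.exp_pos _).le
    _ = _ := by ring

lemma fK_integrable (c : ℝ) (hc : 0 < c) (hc' : c < 1) (a s : ℝ) (ha : 0 < a) (ha' : a < 1) :
    Integrable (fun t : ℝ => fK (a + (starRingEnd ℂ) om * s) (c + om * t)) := by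
  refine integrable_of_expBound _ ?_
    (Real.exp (2 * π * |s| * 2) * (2 * Real.exp (min a (1 - a)))) (min a (1 - a)) 2
    (lt_min ha (by linarith)) (fun x hx => ?_)
  · unfold fK
    refine Continuous.div (by fun_prop) (by fun_prop) (fun t => den_ne_real c hc hc' t)
  · exact fK_bound c hc hc' a s ha ha' x (by simp) (by simpa using r_pos.le) (by simpa using hx)

lemma fK_half_integrable (c : ℝ) (hc : 0 < c) (hc' : c < 1) :
    Integrable (fun t : ℝ => fK (1/2) (c + om * t)) := by
  simpa using fK_integrable c hc hc' (1/2) 0 (by norm_num) (by norm_num)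

lemma half_integral (c : ℝ) (hc : 0 < c) (hc' : c < 1) :
    ∫ t : ℝ, fK (1/2) (c + om * t) * om = 1/2 := by
  set w : ℝ → ℂ := fun t => Complex.exp ((π : ℂ) * I * (c + om * t)) with hw
  have hr := r_pos
  have hwn : ∀ t : ℝ, ‖w t‖ = Real.exp (-(π * (√2/2)) * t) := by
    intro t
    simp only [hw]
    rw [Complex.norm_exp]; congr 1; simp [om_re, om_im]; ring
  have hw0 : w 0 = Complex.exp (((π * c : ℝ) : ℂ) * I) := by
    simp only [hw]; congr 1; push_cast; ring
  have hwim : 0 < (w 0).im := by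
    rw [hw0, Complex.exp_ofReal_mul_I_im]
    apply Real.sin_pos_of_pos_of_lt_pi <;> nlinarith [Real.pi_pos]
  have hwt : ∀ t : ℝ, ‖w t‖ = 1 → t = 0 := by
    intro t ht
    rw [hwn, Real.exp_eq_one_iff] at ht
    rcases mul_eq_zero.mp ht with h | h
    · have : 0 < π * (√2/2) := by positivity
      linarith
    · exact h
  have hp : ∀ t, 1 + w t ≠ 0 := by
    intro t h
    have h1 : w t = -1 := by linear_combination h
    have ht := hwt t (by rw [h1]; simp)
    rw [ht] at h1
    rw [h1] at hwim
    simp at hwim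
  have hm : ∀ t, 1 - w t ≠ 0 := by
    intro t h
    have h1 : w t = 1 := by linear_combination -h
    have ht := hwt t (by rw [h1]; simp)
    rw [ht] at h1
    rw [h1] at hwim
    simp at hwim
  have hslit : ∀ t, I * (1 - w t) / (1 + w t) ∈ slitPlane := by
    intro t
    have hN : 0 < Complex.normSq (1 + w t) := Complex.normSq_pos.mpr (hp t)
    rw [Complex.mem_slitPlane_iff]
    by_cases ht : t = 0
    · left
      rw [ht] at hN ⊢
      have : (I * (1 - w 0) / (1 + w 0)).re = 2 * (w 0).im / Complex.normSq (1 + w 0) := by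
        rw [Complex.div_re]; simp; ring
      rw [this]; positivity
    · right
      have : (I * (1 - w t) / (1 + w t)).im = (1 - Complex.normSq (w t)) / Complex.normSq (1 + w t) := by
        rw [Complex.div_im, Complex.normSq_apply (w t)]; simp; ring
      rw [this]
      apply div_ne_zero _ hN.ne'
      intro h
      apply ht
      apply hwt
      rw [Complex.normSq_eq_norm_sq] at h
      have h3 : ‖w t‖ ^ 2 = 1 := by linarith
      nlinarith [norm_nonneg (w t)]
  have hderw : ∀ t : ℝ, HasDerivAt w (w t * ((π : ℂ) * I * om)) t := by
    intro t
    have h1 : HasDerivAt (fun t : ℝ => (π : ℂ) * I * (c + om * t)) ((π : ℂ) * I * om) t := by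
      have := (((Complex.ofRealCLM.hasDerivAt (x := t)).const_mul om).const_add (c:ℂ)).const_mul
        ((π : ℂ) * I)
      simpa using this
    exact h1.cexp
  have hpi : (π : ℂ) ≠ 0 := by exact_mod_cast Real.pi_ne_zero
  have hder : ∀ t : ℝ, HasDerivAt
      (fun t => Complex.log (I * (1 - w t) / (1 + w t)) / (2 * π * I))
      (fK (1/2) (c + om * t) * om) t := by
    intro t
    have h1 := ((((hderw t).const_sub 1).const_mul I).div ((hderw t).const_add 1) (hp t)).clog_real
      (hslit t)
    have h2 := h1.div_const (2 * π * I)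
    refine h2.congr_deriv ?_
    have hfk : fK (1/2) (c + om * t) = w t / (w t ^ 2 - 1) := by
      unfold fK
      simp only [hw]
      rw [← Complex.exp_nat_mul]
      have e1 : 2 * (π : ℂ) * I * (c + om * t) * (1/2) = π * I * (c + om * t) := by ring
      have e2 : ((2 : ℕ) : ℂ) * (π * I * (c + om * t)) = 2 * (π : ℂ) * I * (c + om * t) := by
        push_cast; ring
      rw [e1, e2]
    have hne : w t ^ 2 - 1 ≠ 0 := by
      have : w t ^ 2 - 1 = -((1 - w t) * (1 + w t)) := by ring
      rw [this]
      exact neg_ne_zero.mpr (mul_ne_zero (hm t) (hp t))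
    rw [hfk]
    have := hm t
    have := hp t
    have := I_ne_zero
    simp only [Pi.div_apply]
    field_simp
    ring
  have hwtop : Tendsto w atTop (𝓝 0) := by
    rw [tendsto_zero_iff_norm_tendsto_zero]
    simp only [hwn]
    apply Real.tendsto_exp_atBot.comp
    exact tendsto_id.const_mul_atTop_of_neg (by have : 0 < π * (√2/2) := by positivity
                                                linarith)
  have hwbot : Tendsto (fun t => (w t)⁻¹) atBot (𝓝 0) := by
    rw [tendsto_zero_iff_norm_tendsto_zero]
    simp only [norm_inv, hwn, ← Real.exp_neg]
    apply Real.tendsto_exp_atBot.comp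
    have : Tendsto (fun t : ℝ => (π * (√2/2)) * t) atBot atBot :=
      tendsto_id.const_mul_atBot (by positivity)
    refine this.congr (fun t => by ring)
  have htop : Tendsto (fun t => Complex.log (I * (1 - w t) / (1 + w t)) / (2 * π * I)) atTop
      (𝓝 (Complex.log I / (2 * π * I))) := by
    have h1 : Tendsto (fun t => I * (1 - w t) / (1 + w t)) atTop (𝓝 I) := by
      have := ((hwtop.const_sub 1).const_mul I).div (hwtop.const_add 1) (by simp)
      simp only [sub_zero, add_zero, mul_one, div_one] at this
      exact this
    exact ((continuousAt_clog (by simp [Complex.mem_slitPlane_iff])).tendsto.comp h1).div_const _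
  have hbot : Tendsto (fun t => Complex.log (I * (1 - w t) / (1 + w t)) / (2 * π * I)) atBot
      (𝓝 (Complex.log (-I) / (2 * π * I))) := by
    have h1 : Tendsto (fun t => I * (1 - w t) / (1 + w t)) atBot (𝓝 (-I)) := by
      have := ((hwbot.sub_const 1).const_mul I).div (hwbot.add_const 1) (by simp)
      simp only [zero_sub, zero_add, div_one, mul_neg, mul_one] at this
      refine this.congr (fun t => ?_)
      have h2 : w t ≠ 0 := Complex.exp_ne_zero _
      have h3 := hp t
      have h4 : (w t)⁻¹ + 1 ≠ 0 := by
        have : (w t)⁻¹ + 1 = (1 + w t) / w t := by field_simp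
        rw [this]; exact div_ne_zero h3 h2
      simp only [Pi.div_apply]
      rw [div_eq_div_iff h4 h3]
      field_simp
    exact ((continuousAt_clog (by simp [Complex.mem_slitPlane_iff])).tendsto.comp h1).div_const _
  rw [integral_of_hasDerivAt_of_tendsto hder ((fK_half_integrable c hc hc').mul_const om) hbot htop,
    Complex.log_I, Complex.log_neg_I]
  have := I_ne_zero
  field_simp
  ring

lemma inner_integral (c : ℝ) (hc : 0 < c) (hc' : c < 1) (a s : ℝ) (ha : 0 < a) (ha' : a < 1)
    (v : ℂ) (hv : v = a + (starRingEnd ℂ) om * s) :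
    (∫ t : ℝ, fK v (c + om * t) * om) * (1 - Complex.exp (-(2 * (π : ℂ) * I * v))) = 1 := by
  set N : ℂ → ℂ := fun u => Complex.exp (2 * (π : ℂ) * I * u * v) -
    Complex.exp (2 * (π : ℂ) * I * u * (1/2)) with hN
  set D : ℂ → ℂ := fun u => Complex.exp (2 * (π : ℂ) * I * u) - 1 with hD
  set G : ℂ → ℂ := fun u => dslope N 0 u / dslope D 0 u with hG
  have hN0 : N 0 = 0 := by simp [hN]
  have hD0 : D 0 = 0 := by simp [hD]
  have hdN : Differentiable ℂ (dslope N 0) := by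
    rw [← differentiableOn_univ, Complex.differentiableOn_dslope Filter.univ_mem]
    exact Differentiable.differentiableOn (by fun_prop)
  have hdD : Differentiable ℂ (dslope D 0) := by
    rw [← differentiableOn_univ, Complex.differentiableOn_dslope Filter.univ_mem]
    exact Differentiable.differentiableOn (by fun_prop)
  have hGeq : ∀ u, D u ≠ 0 → G u = fK v u - fK (1/2) u := by
    intro u hu
    have hu0 : u ≠ 0 := by rintro rfl; exact hu hD0
    simp only [hG]
    rw [dslope_of_ne _ hu0, dslope_of_ne _ hu0, slope_def_field, slope_def_field, hN0, hD0]
    simp only [sub_zero]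
    rw [div_div_div_cancel_right₀ hu0]
    simp only [hN, hD, fK]
    rw [sub_div]
  have hDD : ∀ z : ℂ, 0 ≤ z.im → z.im ≤ √2/2 → dslope D 0 (c + om * z) ≠ 0 := by
    intro z h0 h1
    by_cases hu : c + om * z = 0
    · rw [hu, dslope_same]
      have : HasDerivAt D (2 * (π : ℂ) * I) 0 := by
        have h2 : HasDerivAt (fun u : ℂ => 2 * (π : ℂ) * I * u) (2 * (π : ℂ) * I) 0 := by
          simpa using (hasDerivAt_id (0:ℂ)).const_mul (2 * (π : ℂ) * I)
        have h3 := h2.cexp.sub_const 1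
        simp only [mul_zero, Complex.exp_zero, one_mul] at h3
        exact h3
      rw [this.deriv]
      exact Complex.two_pi_I_ne_zero
    · rw [dslope_of_ne _ hu, slope_def_field, hD0]
      simp only [sub_zero]
      refine div_ne_zero ?_ hu
      intro h
      exact hu (den_zero c hc hc' z h0 h1 h)
  have hrr := rr
  have hr := r_pos
  have hshift := strip_shift (fun z => G (c + om * z)) (√2/2) r_pos.le ?_
    (Real.exp (2 * π * |s| * 2) * (2 * Real.exp (min a (1 - a))) + 2 * Real.exp (1/2))
    (min a (1-a)) 2 (lt_min ha (by linarith)) ?_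
  · have hL : ∀ t : ℝ, G (c + om * t) = fK v (c + om * t) - fK (1/2) (c + om * t) := fun t =>
      hGeq _ (den_ne_real c hc hc' t)
    have hR : ∀ t : ℝ, G (c + om * (((t - √2/2 : ℝ) : ℂ) + ((√2/2 : ℝ) : ℂ) * I)) =
        Complex.exp (-(2 * (π : ℂ) * I * v)) * fK v (c + om * t) + fK (1/2) (c + om * t) := by
      intro t
      have hu : (c : ℂ) + om * (((t - √2/2 : ℝ) : ℂ) + ((√2/2 : ℝ) : ℂ) * I) = (c + om * t) - 1 := by
        have : (starRingEnd ℂ) om = ((√2/2 : ℝ) : ℂ) - ((√2/2 : ℝ) : ℂ) * I := by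
          apply Complex.ext <;> simp [om_re, om_im]
        have h2 := om_conj_mul
        rw [this] at h2
        rw [Complex.ofReal_sub]
        linear_combination -h2
      rw [hu]
      have hDs : D ((c + om * t) - 1) = D (c + om * t) := by
        simp only [hD]
        rw [show 2 * (π : ℂ) * I * ((c + om * t) - 1) = 2 * (π : ℂ) * I * (c + om * t) - 2 * π * I by
          ring, Complex.exp_periodic.sub_eq]
      have hDne : D (c + om * t) ≠ 0 := den_ne_real c hc hc' t
      rw [hGeq _ (by rw [hDs]; exact hDne)]
      simp only [hD] at hDs
      unfold fK
      rw [hDs, ← mul_div_assoc (Complex.exp (-(2 * (π : ℂ) * I * v))), ← Complex.exp_add, ← sub_div, ← add_div]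
      congr 1
      have e1 : Complex.exp (2 * (π : ℂ) * I * ((c + om * t) - 1) * (1/2)) =
          - Complex.exp (2 * (π : ℂ) * I * (c + om * t) * (1/2)) := by
        rw [show 2 * (π : ℂ) * I * ((c + om * t) - 1) * (1/2) =
          2 * (π : ℂ) * I * (c + om * t) * (1/2) - π * I by ring, Complex.exp_sub, Complex.exp_pi_mul_I,
          div_neg, div_one]
      rw [e1, sub_neg_eq_add]
      congr 2
      ring
    have hi1 : Integrable (fun t : ℝ => fK v (c + om * t)) := by
      rw [hv]; exact fK_integrable c hc hc' a s ha ha'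
    have hi2 := fK_half_integrable c hc hc'
    have hhalf := half_integral c hc hc'
    rw [integral_mul_const] at hhalf ⊢
    rw [← integral_sub_right_eq_self (fun x : ℝ => G (c + om * ((x : ℂ) + ((√2/2 : ℝ) : ℂ) * I))) (√2/2)]
      at hshift
    simp only [hL, hR] at hshift
    rw [integral_sub hi1 hi2, integral_add (hi1.const_mul _) hi2, integral_const_mul] at hshift
    linear_combination om * hshift + 2 * hhalf
  · intro z h0 h1
    simp only [hG]
    refine DifferentiableAt.fun_div ?_ ?_ (hDD z h0 h1)
    · exact (hdN _).comp z (by fun_prop)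
    · exact (hdD _).comp z (by fun_prop)
  · intro z h0 h1 hx
    have hne : D (c + om * z) ≠ 0 := by
      intro h
      have h2 := den_zero c hc hc' z h0 h1 h
      have him := congrArg Complex.im h2
      simp [om_re, om_im] at him
      have h3 : √2/2 * (z.re + z.im) = 0 := by linarith
      have h4 : z.re = - z.im := by
        rcases mul_eq_zero.mp h3 with h | h
        · exact absurd h hr.ne'
        · linarith
      rw [h4, abs_neg, abs_of_nonneg h0] at hx
      nlinarith
    have hb1 := fK_bound c hc hc' a s ha ha' z h0 h1 hx
    have hb2 := fK_bound c hc hc' (1/2) 0 (by norm_num) (by norm_num) z h0 h1 hx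
    rw [← hv] at hb1
    have hmin : min (1/2 : ℝ) (1 - 1/2) = 1/2 := by norm_num
    rw [hmin] at hb2
    simp only [abs_zero, mul_zero, zero_mul, Real.exp_zero, one_mul, ofReal_zero, add_zero] at hb2
    push_cast at hb2
    have hδ : min a (1 - a) ≤ 1/2 := by
      rcases le_total a (1/2) with h | h
      · exact (min_le_left _ _).trans h
      · exact (min_le_right _ _).trans (by linarith)
    have h5 : Real.exp (-(1/2) * |z.re|) ≤ Real.exp (-(min a (1 - a)) * |z.re|) :=
      Real.exp_le_exp.mpr (by nlinarith [abs_nonneg z.re])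
    show ‖G (c + om * z)‖ ≤ _
    rw [hGeq _ hne, add_mul]
    refine (norm_sub_le _ _).trans (add_le_add hb1 (hb2.trans ?_))
    exact mul_le_mul_of_nonneg_left h5 (by positivity)

lemma conj_om_sq : (starRingEnd ℂ) om ^ 2 = -I := by
  rw [← map_pow, om_sq, Complex.conj_I]

lemma gauss_line (x τ : ℂ) (hτ : 0 < τ.re) (c₂ : ℝ) (u : ℂ) :
    ∫ s : ℝ, Complex.exp (-((π : ℂ) * I * ((c₂ + (starRingEnd ℂ) om * s) - x) ^ 2 / τ) +
        2 * (π : ℂ) * I * u * (c₂ + (starRingEnd ℂ) om * s)) =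
      τ ^ (1/2 : ℂ) * Complex.exp ((π : ℂ) * I * τ * u ^ 2 + 2 * (π : ℂ) * I * x * u) := by
  have hτ0 : τ ≠ 0 := by rintro rfl; simp at hτ
  have hpi : (π : ℂ) ≠ 0 := by exact_mod_cast Real.pi_ne_zero
  have hb : (-((π : ℂ) / τ)).re < 0 := by
    have : 0 < Complex.normSq τ := Complex.normSq_pos.mpr hτ0
    have h2 : ((π : ℂ) / τ).re = π * τ.re / Complex.normSq τ := by
      rw [Complex.div_re]; simp
    rw [Complex.neg_re, h2]
    have := Real.pi_pos
    have : 0 < π * τ.re / Complex.normSq τ := by positivity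
    linarith
  have hq := integral_cexp_quadratic hb
    (2 * (π : ℂ) * I * (starRingEnd ℂ) om * (u - (c₂ - x) / τ))
    (-((π : ℂ) * I * (c₂ - x) ^ 2 / τ) + 2 * (π : ℂ) * I * u * c₂)
  have hsq := conj_om_sq
  have e1 : ∀ s : ℝ, -((π : ℂ) * I * ((c₂ + (starRingEnd ℂ) om * s) - x) ^ 2 / τ) +
        2 * (π : ℂ) * I * u * (c₂ + (starRingEnd ℂ) om * s) =
      -((π : ℂ) / τ) * (s:ℂ) ^ 2 + 2 * (π : ℂ) * I * (starRingEnd ℂ) om * (u - (c₂ - x) / τ) * s +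
      (-((π : ℂ) * I * (c₂ - x) ^ 2 / τ) + 2 * (π : ℂ) * I * u * c₂) := by
    intro s
    have : (((c₂ : ℂ) + (starRingEnd ℂ) om * s) - x) ^ 2 =
      (c₂ - x) ^ 2 + 2 * (c₂ - x) * (starRingEnd ℂ) om * s - I * s ^ 2 := by
      linear_combination (s:ℂ) ^ 2 * hsq
    rw [this]
    field_simp
    linear_combination (s:ℂ)^2 * I_sq
  simp only [e1]
  rw [hq]
  congr 1
  · congr 1; rw [neg_neg]; field_simp
  · congr 1
    have : (2 * (π : ℂ) * I * (starRingEnd ℂ) om * (u - (c₂ - x) / τ)) ^ 2 =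
      4 * π ^ 2 * I * (u - (c₂ - x) / τ) ^ 2 := by
      rw [mul_pow, mul_pow, hsq, mul_pow, I_sq]; ring
    rw [this]
    field_simp
    ring

lemma gauss_integrable (x τ : ℂ) (hτ : 0 < τ.re) (c₂ : ℝ) (u : ℂ) :
    Integrable (fun s : ℝ => Complex.exp (-((π : ℂ) * I * ((c₂ + (starRingEnd ℂ) om * s) - x) ^ 2 / τ) +
        2 * (π : ℂ) * I * u * (c₂ + (starRingEnd ℂ) om * s))) := by
  by_contra h
  have h1 := gauss_line x τ hτ c₂ u
  rw [integral_undef h] at h1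
  have hτ0 : τ ≠ 0 := by rintro rfl; simp at hτ
  have h2 : τ ^ (1/2 : ℂ) ≠ 0 := by
    rw [Ne, Complex.cpow_eq_zero_iff]; tauto
  exact mul_ne_zero h2 (Complex.exp_ne_zero _) h1.symm

/-- Functional equation of the Mordell integral for complex `τ` with `Re τ > 0`. -/
theorem mordell_functional_equation (x τ : ℂ) (hτ : 0 < τ.re) (c₁ c₂ : ℝ)
    (hc₁ : 0 < c₁) (hc₁' : c₁ < 1) (hc₂ : 0 < c₂) (hc₂' : c₂ < 1) :
    mordellPhi x τ c₁ =
      -(Complex.exp ((π : ℂ) * Complex.I * (1 / 4 - x ^ 2 / τ)) / τ ^ (1 / 2 : ℂ)) *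
        starRingEnd ℂ
          (mordellPhi (-(starRingEnd ℂ x) / starRingEnd ℂ τ) (1 / starRingEnd ℂ τ) c₂) := by
  have hτ0 : τ ≠ 0 := by rintro rfl; simp at hτ
  have hτs : τ ^ (1/2 : ℂ) ≠ 0 := by
    rw [Ne, Complex.cpow_eq_zero_iff]; tauto
  set ob := (starRingEnd ℂ) om with hob
  set K : ℝ → ℝ → ℂ := fun t s =>
    Complex.exp (-((π : ℂ) * I * ((c₂ + ob * s) - x) ^ 2 / τ)) * fK (c₂ + ob * s) (c₁ + om * t) * om
    with hK
  have hKint : Integrable (Function.uncurry K) (volume.prod volume) := by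
    have h1 : Integrable (fun t : ℝ => fK c₂ (c₁ + om * t) * om) := by
      simpa using (fK_integrable c₁ hc₁ hc₁' c₂ 0 hc₂ hc₂').mul_const om
    have h2 := gauss_integrable x τ hτ c₂ c₁
    have h3 := h1.mul_prod h2
    have h4 := h3.bdd_mul (c := 1)
      (f := fun p : ℝ × ℝ => Complex.exp (((2 * π * p.1 * p.2 - 2 * π * c₁ * c₂ : ℝ) : ℂ) * I))
      (Continuous.aestronglyMeasurable (by fun_prop))
      (Eventually.of_forall fun p => by
        rw [Complex.norm_exp_ofReal_mul_I])
    refine h4.congr (Eventually.of_forall fun p => ?_)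
    obtain ⟨t, s⟩ := p
    simp only [hK, Function.uncurry, fK, ← hob]
    have e : Complex.exp (((2 * π * t * s - 2 * π * c₁ * c₂ : ℝ) : ℂ) * I) *
        (Complex.exp (2 * π * I * (c₁ + om * t) * c₂) *
          Complex.exp (-((π : ℂ) * I * ((c₂ + ob * s) - x) ^ 2 / τ) +
            2 * (π : ℂ) * I * c₁ * (c₂ + ob * s)))
        = Complex.exp (-((π : ℂ) * I * ((c₂ + ob * s) - x) ^ 2 / τ)) *
          Complex.exp (2 * π * I * (c₁ + om * t) * (c₂ + ob * s)) := by
      simp only [← Complex.exp_add]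
      congr 1
      push_cast
      linear_combination (-2 * π * I * t * s) * om_conj_mul
    linear_combination (om / (Complex.exp (2 * π * I * (c₁ + om * t)) - 1)) * e
  have hswap := integral_integral_swap hKint
  have hL : mordellPhi x τ c₁ = (τ ^ (1/2 : ℂ))⁻¹ * ∫ t : ℝ, ∫ s : ℝ, K t s := by
    unfold mordellPhi lineInt
    rw [← integral_const_mul]
    congr 1
    ext t
    have hg := gauss_line x τ hτ c₂ (c₁ + om * t)
    have : ∀ s : ℝ, K t s = Complex.exp (-((π : ℂ) * I * ((c₂ + ob * s) - x) ^ 2 / τ) +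
        2 * (π : ℂ) * I * (c₁ + om * t) * (c₂ + ob * s)) *
        (om / (Complex.exp (2 * (π : ℂ) * I * (c₁ + om * t)) - 1)) := by
      intro s
      simp only [hK, fK]
      rw [Complex.exp_add]; ring
    simp only [this]
    rw [integral_mul_const, hg]
    change _ / (Complex.exp (2 * (π : ℂ) * I * (c₁ + om * t)) - 1) * om = _
    rw [mul_assoc (τ ^ (1/2 : ℂ)), inv_mul_cancel_left₀ hτs]
    change Complex.exp ((π : ℂ) * I * τ * (c₁ + om * t) ^ 2 + 2 * (π : ℂ) * I * x * (c₁ + om * t)) / _ * om = _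
    ring
  rw [hL, hswap]
  unfold mordellPhi lineInt
  rw [← integral_conj, ← integral_const_mul, ← integral_const_mul]
  congr 1
  ext s
  have hin := inner_integral c₁ hc₁ hc₁' c₂ s hc₂ hc₂' (c₂ + ob * s) rfl
  have hne : 1 - Complex.exp (-(2 * (π : ℂ) * I * (c₂ + ob * s))) ≠ 0 := right_ne_zero_of_mul_eq_one hin
  have hKs : ∫ t : ℝ, K t s = Complex.exp (-((π : ℂ) * I * ((c₂ + ob * s) - x) ^ 2 / τ)) *
      (1 / (1 - Complex.exp (-(2 * (π : ℂ) * I * (c₂ + ob * s))))) := by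
    rw [← eq_one_div_of_mul_eq_one_left hin, ← integral_const_mul]
    simp only [hK, mul_assoc]
  rw [hKs]
  change _ = _ * (starRingEnd ℂ) (Complex.exp ((π : ℂ) * I * (1 / (starRingEnd ℂ) τ) * (c₂ + om * s) ^ 2 +
    2 * (π : ℂ) * I * (-(starRingEnd ℂ) x / (starRingEnd ℂ) τ) * (c₂ + om * s)) /
    (Complex.exp (2 * (π : ℂ) * I * (c₂ + om * s)) - 1) * om)
  simp only [map_mul, map_div₀, map_sub, map_one, ← Complex.exp_conj, map_add, map_pow, map_neg,
    Complex.conj_I, Complex.conj_ofReal, Complex.conj_conj, ← hob, map_ofNat]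
  have hE : Complex.exp ((π : ℂ) * I * (1/4 - x ^ 2 / τ)) = om * Complex.exp (-((π : ℂ) * I * x ^ 2 / τ)) := by
    unfold om
    rw [← Complex.exp_add]
    congr 1
    push_cast
    ring
  have hE2 : Complex.exp (-((π : ℂ) * I * ((c₂ + ob * s) - x) ^ 2 / τ)) =
      Complex.exp (-((π : ℂ) * I * x ^ 2 / τ)) *
      Complex.exp ((π : ℂ) * -I * (1 / τ) * (c₂ + ob * s) ^ 2 +
        2 * (π : ℂ) * -I * (-x / τ) * (c₂ + ob * s)) := by
    rw [← Complex.exp_add]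
    congr 1
    ring
  rw [hE, hE2]
  rw [show 2 * (π : ℂ) * -I * (c₂ + ob * s) = -(2 * (π : ℂ) * I * (c₂ + ob * s)) by ring]
  have hoo : om * ob = 1 := om_conj_mul
  generalize Complex.exp ((π : ℂ) * -I * (1 / τ) * (c₂ + ob * s) ^ 2 +
        2 * (π : ℂ) * -I * (-x / τ) * (c₂ + ob * s)) = A
  generalize Complex.exp (-((π : ℂ) * I * x ^ 2 / τ)) = B
  generalize Complex.exp (-(2 * (π : ℂ) * I * (c₂ + ob * s))) = q at hne ⊢
  have hne2 : q - 1 ≠ 0 := fun h => hne (by linear_combination -h)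
  generalize τ ^ (1/2 : ℂ) = T at hτs ⊢
  have : 1 / (1 - q) = - (1 / (q - 1)) := by
    rw [← neg_sub q 1, one_div_neg_eq_neg_one_div]
  rw [this]
  linear_combination (B * A * T⁻¹ * (q - 1)⁻¹) * hoo
end

section
/- Integral transformation formula of the Mordell integral: let x, τ be complex numbers with Re(τ) > 0. Then ∫_{0 ↗ 1} (e^{iπτu² + 2πixu}/(e^{2πiu} − 1)) du = (e^{iπ(1/4 − x²/τ)}/√τ)·∫_{0 ↖ 1} (e^{−iπu²/τ + 2πixu/τ}/(e^{−2πiu} − 1)) du, where √τ denotes the principal branch of the square root. -/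
open scoped Real
open MeasureTheory Set Complex

lemma aux_inv_integral (a : ℝ) (ha : a ≠ 0) (T : ℝ) :
    ∫ x : ℝ in (-T)..T, ((x : ℂ) + a * I)⁻¹ = -(2 * I * (Real.arctan (T / a) : ℂ)) := by
  have hne : ∀ x : ℝ, (x : ℂ) + a * I ≠ 0 := by
    intro x h
    have := congrArg Complex.im h
    simp at this
    exact ha this
  have hd : ∀ x : ℝ, HasDerivAt (fun x : ℝ => ((1 / 2 * Real.log (x ^ 2 + a ^ 2) : ℝ) : ℂ)
      - I * ((Real.arctan (x / a) : ℝ) : ℂ)) (((x : ℂ) + a * I)⁻¹) x := by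
    intro x
    have hpos : 0 < x ^ 2 + a ^ 2 := by positivity
    have h1 : HasDerivAt (fun x : ℝ => 1 / 2 * Real.log (x ^ 2 + a ^ 2))
        (1 / 2 * ((2 * x) / (x ^ 2 + a ^ 2))) x := by
      have := (((hasDerivAt_pow 2 x).add_const (a ^ 2)).log hpos.ne').const_mul (1 / 2 : ℝ)
      simpa using this
    have h2 : HasDerivAt (fun x : ℝ => Real.arctan (x / a))
        (1 / (1 + (x / a) ^ 2) * (1 / a)) x :=
      ((hasDerivAt_id x).div_const a).arctan
    have := h1.ofReal_comp.sub (h2.ofReal_comp.const_mul I)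
    convert! this using 1
    have hx : ((x : ℂ) ^ 2 + a ^ 2) ≠ 0 := by exact_mod_cast hpos.ne'
    have ha' : (a : ℂ) ≠ 0 := by exact_mod_cast ha
    have h3 : (1 + ((x : ℂ) / a) ^ 2) ≠ 0 := by
      have : (1 + ((x : ℂ) / a) ^ 2) = (x ^ 2 + a ^ 2) / a ^ 2 := by field_simp; ring
      rw [this]; positivity
    have h4 : (1 + ((x : ℂ) / a) ^ 2) = (x ^ 2 + a ^ 2) / a ^ 2 := by field_simp; ring
    push_cast
    rw [h4]
    refine inv_eq_of_mul_eq_one_right ?_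
    field_simp
    ring_nf
    simp [I_sq]
  rw [intervalIntegral.integral_eq_sub_of_hasDerivAt (fun x _ => hd x)]
  · simp [neg_div, Real.arctan_neg]
    ring
  · apply Continuous.intervalIntegrable
    exact Continuous.inv₀ (by fun_prop) hne

lemma aux_integrable (f : ℝ → ℂ) (hf : Continuous f) (k C M : ℝ) (hk : 0 < k)
    (h : ∀ x : ℝ, M ≤ |x| → ‖f x‖ ≤ C * Real.exp (-k * |x|)) : Integrable f := by
  refine hf.locallyIntegrable.integrable_of_isBigO_atBot_atTop
    (g := fun x => Real.exp (k * x)) (g' := fun x => Real.exp (-k * x)) ?_ ?_ ?_ ?_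
  · refine Asymptotics.IsBigO.of_bound C ?_
    filter_upwards [Filter.eventually_le_atBot (-|M|), Filter.eventually_le_atBot 0] with x hx hx0
    have := h x (by rw [abs_of_nonpos hx0]; linarith [le_abs_self M])
    rw [abs_of_nonpos hx0] at this
    rw [Real.norm_eq_abs, abs_of_pos (Real.exp_pos _)]
    simpa using this
  · exact ⟨Iic 0, Filter.Iic_mem_atBot 0, integrableOn_exp_mul_Iic hk 0⟩
  · refine Asymptotics.IsBigO.of_bound C ?_
    filter_upwards [Filter.eventually_ge_atTop (|M|), Filter.eventually_ge_atTop 0] with x hx hx0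
    have := h x (by rw [abs_of_nonneg hx0]; linarith [le_abs_self M])
    rw [abs_of_nonneg hx0] at this
    rw [Real.norm_eq_abs, abs_of_pos (Real.exp_pos _)]
    simpa using this
  · exact ⟨Ioi 0, Filter.Ioi_mem_atTop 0, integrableOn_exp_mul_Ioi (by linarith) 0⟩

lemma aux_residue (g h : ℂ → ℂ) (a b k C M : ℝ) (ha : 0 < a) (hb : 0 < b) (hk : 0 < k)
    (hd : ∀ z : ℂ, -b ≤ z.im → z.im ≤ a → DifferentiableAt ℂ h z)
    (hg : ∀ z : ℂ, z ≠ 0 → g z = h z / z)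
    (hbd : ∀ x y : ℝ, M ≤ |x| → -b ≤ y → y ≤ a → ‖g (x + y * I)‖ ≤ C * Real.exp (-k * |x|)) :
    Integrable (fun x : ℝ => g (x + a * I)) ∧
    (∫ x : ℝ, g (x + (-b : ℝ) * I)) - (∫ x : ℝ, g (x + a * I)) = 2 * π * I * h 0 := by
  have him : ∀ y : ℝ, y ≠ 0 → ∀ x : ℝ, (x : ℂ) + y * I ≠ 0 := by
    intro y hy x h0
    have := congrArg Complex.im h0
    simp at this
    exact hy this
  have hcont : ∀ y : ℝ, y ≠ 0 → -b ≤ y → y ≤ a → Continuous (fun x : ℝ => g (x + y * I)) := by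
    intro y hy h1 h2
    have : (fun x : ℝ => g (x + y * I)) = fun x : ℝ => h (x + y * I) / (x + y * I) := by
      ext x; exact hg _ (him y hy x)
    rw [this]
    refine Continuous.div ?_ (by fun_prop) (him y hy)
    rw [continuous_iff_continuousAt]
    intro x
    exact ContinuousAt.comp (f := fun x : ℝ => (x : ℂ) + y * I) (g := h)
      (hd _ (by simpa using h1) (by simpa using h2)).continuousAt (by fun_prop)
  have hIntg : ∀ y : ℝ, y ≠ 0 → -b ≤ y → y ≤ a → Integrable (fun x : ℝ => g (x + y * I)) := by
    intro y hy h1 h2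
    exact aux_integrable _ (hcont y hy h1 h2) k C M hk (fun x hx => hbd x y hx h1 h2)
  refine ⟨hIntg a ha.ne' (by linarith) le_rfl, ?_⟩
  have hia := hIntg a ha.ne' (by linarith) le_rfl
  have hib := hIntg (-b) (by linarith) le_rfl (by linarith)
  set F := dslope h 0 with hF
  have hFe : ∀ z : ℂ, z ≠ 0 → F z = g z - h 0 * z⁻¹ := by
    intro z hz
    rw [hF, dslope_of_ne _ hz, slope_def_field, hg z hz]
    field_simp
    simp
  have hrect : ∀ T : ℝ, 0 < T →
      (∫ x : ℝ in (-T)..T, F (x + (-b : ℝ) * I)) - (∫ x : ℝ in (-T)..T, F (x + a * I)) +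
      I • (∫ y : ℝ in (-b)..a, F (T + y * I)) - I • (∫ y : ℝ in (-b)..a, F ((-T : ℝ) + y * I)) = 0 := by
    intro T hT
    have := integral_boundary_rect_eq_zero_of_differentiableOn F ⟨-T, -b⟩ ⟨T, a⟩ ?_
    · simpa using this
    · refine (Complex.differentiableOn_dslope ?_).2 ?_
      · refine Filter.mem_of_superset (x := Ioo (-T) T ×ℂ Ioo (-b) a)
          (IsOpen.mem_nhds (isOpen_Ioo.reProdIm isOpen_Ioo) ?_) ?_
        · simp [mem_reProdIm, hT, ha, hb]
        · intro z hz
          rw [mem_reProdIm] at hz ⊢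
          exact ⟨Icc_subset_uIcc (Ioo_subset_Icc_self hz.1), Icc_subset_uIcc (Ioo_subset_Icc_self hz.2)⟩
      · intro z hz
        rw [mem_reProdIm] at hz
        have h2 := hz.2
        simp only at h2
        rw [uIcc_of_le (by linarith)] at h2
        exact (hd z h2.1 h2.2).differentiableWithinAt
  have hhor : ∀ y : ℝ, y ≠ 0 → -b ≤ y → y ≤ a → ∀ T : ℝ,
      (∫ x : ℝ in (-T)..T, F (x + y * I)) =
        (∫ x : ℝ in (-T)..T, g (x + y * I)) + h 0 * (2 * I * (Real.arctan (T / y) : ℂ)) := by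
    intro y hy h1 h2 T
    have e : ∀ x : ℝ, F (x + y * I) = g (x + y * I) - h 0 * (x + y * I)⁻¹ :=
      fun x => hFe _ (him y hy x)
    simp_rw [e]
    rw [intervalIntegral.integral_sub, intervalIntegral.integral_const_mul, aux_inv_integral y hy]
    · ring
    · exact (hcont y hy h1 h2).intervalIntegrable _ _
    · apply Continuous.intervalIntegrable
      exact continuous_const.mul (Continuous.inv₀ (by fun_prop) (him y hy))
  have hvert : ∀ T : ℝ, 0 < |T| → M ≤ |T| → ‖∫ y : ℝ in (-b)..a, F (T + y * I)‖ ≤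
      (C * Real.exp (-k * |T|) + ‖h 0‖ * |T|⁻¹) * |a - -b| := by
    intro T hT hM
    refine intervalIntegral.norm_integral_le_of_norm_le_const ?_
    intro y hy
    rw [uIoc_of_le (by linarith)] at hy
    have habs : |T| ≤ ‖(T : ℂ) + y * I‖ := by
      simpa using Complex.abs_re_le_norm ((T : ℂ) + y * I)
    have hne : (T : ℂ) + y * I ≠ 0 := by
      rw [← norm_pos_iff]; linarith
    rw [hFe _ hne]
    refine (norm_sub_le _ _).trans (add_le_add (hbd T y hM hy.1.le hy.2) ?_)
    rw [norm_mul, norm_inv]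
    gcongr
  have hlimv : Filter.Tendsto (fun T : ℝ => (C * Real.exp (-k * |T|) + ‖h 0‖ * |T|⁻¹) * |a - -b|)
      Filter.atTop (nhds 0) := by
    have h1 : Filter.Tendsto (fun T : ℝ => |T|) Filter.atTop Filter.atTop := Filter.tendsto_abs_atTop_atTop
    have h2 : Filter.Tendsto (fun T : ℝ => Real.exp (-k * |T|)) Filter.atTop (nhds 0) := by
      refine Real.tendsto_exp_atBot.comp ?_
      exact h1.const_mul_atTop_of_neg (by linarith)
    have h3 : Filter.Tendsto (fun T : ℝ => |T|⁻¹) Filter.atTop (nhds 0) :=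
      tendsto_inv_atTop_zero.comp h1
    simpa using ((h2.const_mul C).add (h3.const_mul ‖h 0‖)).mul_const |a - -b|
  have hv1 : Filter.Tendsto (fun T : ℝ => ∫ y : ℝ in (-b)..a, F (T + y * I))
      Filter.atTop (nhds 0) := by
    refine squeeze_zero_norm' ?_ hlimv
    filter_upwards [Filter.eventually_gt_atTop 0, Filter.eventually_ge_atTop M] with T hT hM
    exact hvert T (abs_pos.2 hT.ne') (hM.trans (le_abs_self T))
  have hv2 : Filter.Tendsto (fun T : ℝ => ∫ y : ℝ in (-b)..a, F ((-T : ℝ) + y * I))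
      Filter.atTop (nhds 0) := by
    refine squeeze_zero_norm' ?_ hlimv
    filter_upwards [Filter.eventually_gt_atTop 0, Filter.eventually_ge_atTop M] with T hT hM
    have := hvert (-T) (by rw [abs_neg]; exact abs_pos.2 hT.ne')
      (by rw [abs_neg]; exact hM.trans (le_abs_self T))
    rwa [abs_neg] at this
  have hg1 := intervalIntegral_tendsto_integral hia Filter.tendsto_neg_atTop_atBot Filter.tendsto_id
  have hg2 := intervalIntegral_tendsto_integral hib Filter.tendsto_neg_atTop_atBot Filter.tendsto_id
  have hat1 : Filter.Tendsto (fun T : ℝ => (Real.arctan (T / a) : ℂ)) Filter.atTop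
      (nhds ((π / 2 : ℝ) : ℂ)) := by
    refine (Complex.continuous_ofReal.tendsto _).comp ?_
    exact (tendsto_nhds_of_tendsto_nhdsWithin Real.tendsto_arctan_atTop).comp
      (Filter.tendsto_id.atTop_div_const ha)
  have hat2 : Filter.Tendsto (fun T : ℝ => (Real.arctan (T / -b) : ℂ)) Filter.atTop
      (nhds (-((π / 2 : ℝ) : ℂ))) := by
    have e : ∀ T : ℝ, (Real.arctan (T / -b) : ℂ) = - ((Real.arctan (T / b) : ℝ) : ℂ) := by
      intro T; rw [div_neg, Real.arctan_neg]; simp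
    simp_rw [e]
    refine Filter.Tendsto.neg ((Complex.continuous_ofReal.tendsto _).comp ?_)
    exact (tendsto_nhds_of_tendsto_nhdsWithin Real.tendsto_arctan_atTop).comp
      (Filter.tendsto_id.atTop_div_const hb)
  have hlim := (((hg2.add ((hat2.const_mul (2 * I)).const_mul (h 0))).sub
    (hg1.add ((hat1.const_mul (2 * I)).const_mul (h 0)))).add (hv1.const_smul I)).sub
      (hv2.const_smul I)
  have h0 : (0 : ℂ) = _ := tendsto_nhds_unique (Filter.Tendsto.congr' ?_ tendsto_const_nhds) hlim
  · simp only [smul_zero, add_zero, sub_zero] at h0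
    push_cast at h0 ⊢
    linear_combination -h0
  · filter_upwards [Filter.eventually_gt_atTop 0] with T hT
    have hr := hrect T hT
    rw [hhor a ha.ne' (by linarith) le_rfl,
      hhor (-b) (by linarith) le_rfl (by linarith)] at hr
    exact hr.symm

lemma aux_den_ne (q : ℝ) (hq : 0 < q) (hq2 : q ^ 2 = 1 / 2) (z : ℂ) (hz : z ≠ 0)
    (h1 : -q < z.im) (h2 : z.im < q) :
    cexp (2 * π * I * (q + q * I) * z) - 1 ≠ 0 := by
  intro h
  rw [sub_eq_zero, Complex.exp_eq_one_iff] at h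
  obtain ⟨n, hn⟩ := h
  have hpi : (2 * π * I : ℂ) ≠ 0 := by simp [Real.pi_ne_zero]
  have hn' : (q + q * I) * z = n := by
    apply mul_left_cancel₀ hpi
    linear_combination hn
  have hre := congrArg Complex.re hn'
  have him := congrArg Complex.im hn'
  simp at hre him
  have hre' : z.re = -z.im := by
    have : q * (z.re + z.im) = 0 := by linarith
    rcases mul_eq_zero.1 this with h | h
    · exact absurd h hq.ne'
    · linarith
  have hn2 : (n : ℝ) = -2 * q * z.im := by rw [← hre, hre']; ring
  have hlt : |(n : ℝ)| < 1 := by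
    rw [hn2, abs_lt]; constructor <;> nlinarith
  have hn0 : n = 0 := by
    rw [← Int.abs_lt_one_iff]; exact_mod_cast hlt
  have him0 : z.im = 0 := by
    rw [hn0] at hn2
    simp at hn2
    rcases hn2 with h | h
    · exact absurd h hq.ne'
    · exact h
  apply hz
  apply Complex.ext <;> simp [hre', him0]

lemma aux_bound (q : ℝ) (hq : 0 < q) (hq2 : q ^ 2 = 1 / 2) (c s : ℝ) (hc : 0 < c) (hc' : c < 1) :
    ∃ k C : ℝ, 0 < k ∧ 0 ≤ C ∧ ∀ x y : ℝ, 2 ≤ |x| → -1 ≤ y → y ≤ 1 →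
      ‖cexp (2 * π * I * (c + I * (q + q * I) * s) * (1 + (q + q * I) * (x + y * I))) /
        (cexp (2 * π * I * (q + q * I) * (x + y * I)) - 1)‖ ≤ C * Real.exp (-k * |x|) := by
  have hpi := Real.pi_gt_three
  set p := 2 * π * q with hp
  have hq1 : 1 / 2 < q := by nlinarith
  have hp1 : 1 < p := by nlinarith
  set A := -(p * s) with hA
  set m := p * c - 2 * π * s with hm
  set k := p * min c (1 - c) with hk
  have hmin : 0 < min c (1 - c) := lt_min hc (by linarith)
  have hq2' : (q : ℂ) ^ 2 = 1 / 2 := by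
    rw [← Complex.ofReal_pow, hq2]; norm_num
  refine ⟨k, 2 * Real.exp (A + |m| + p), by positivity, by positivity, ?_⟩
  intro x y hx hy1 hy2
  have hnum : ‖cexp (2 * π * I * (c + I * (q + q * I) * s) * (1 + (q + q * I) * (x + y * I)))‖
      = Real.exp (A - p * c * x - m * y) := by
    rw [Complex.norm_exp]
    congr 1
    simp
    rw [hA, hm, hp]
    linear_combination (4 * π * s * y) * hq2
  have hE : ‖cexp (2 * π * I * (q + q * I) * (x + y * I))‖ = Real.exp (-p * (x + y)) := by
    rw [Complex.norm_exp]
    congr 1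
    simp
    rw [hp]
    ring
  have hmy : -(m * y) ≤ |m| := by
    have : |m * y| ≤ |m| * 1 := by
      rw [abs_mul]; gcongr; exact abs_le.2 ⟨hy1, hy2⟩
    linarith [neg_abs_le (m * y)]
  have he1 : (2 : ℝ) ≤ Real.exp 1 := by linarith [Real.add_one_le_exp (1 : ℝ)]
  rw [norm_div, hnum]
  rcases le_total 0 x with h0 | h0
  · rw [abs_of_nonneg h0] at hx ⊢
    have hEle : Real.exp (-p * (x + y)) ≤ 1 / 2 := by
      have : Real.exp (-p * (x + y)) ≤ Real.exp (-1) := Real.exp_le_exp.2 (by nlinarith)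
      rw [Real.exp_neg] at this
      refine this.trans ?_
      rw [one_div]; gcongr
    have hden : 1 / 2 ≤ ‖cexp (2 * π * I * (q + q * I) * (x + y * I)) - 1‖ := by
      have := norm_sub_norm_le (1 : ℂ) (cexp (2 * π * I * (q + q * I) * (x + y * I)))
      rw [norm_sub_rev, hE, norm_one] at this
      linarith
    have hkx : k * x ≤ p * c * x := by
      rw [hk]; gcongr; exact min_le_left _ _
    rw [div_le_iff₀ (by linarith)]
    calc Real.exp (A - p * c * x - m * y) ≤ Real.exp (A + |m| + p + -k * x) :=
          Real.exp_le_exp.2 (by linarith)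
      _ = 2 * Real.exp (A + |m| + p) * Real.exp (-k * x) * (1 / 2) := by
          rw [Real.exp_add]; ring
      _ ≤ _ := by gcongr
  · rw [abs_of_nonpos h0] at hx ⊢
    have hEge : 2 ≤ Real.exp (-p * (x + y)) := by
      refine he1.trans (Real.exp_le_exp.2 (by nlinarith))
    have hden : 1 / 2 * Real.exp (-p * (x + y)) ≤
        ‖cexp (2 * π * I * (q + q * I) * (x + y * I)) - 1‖ := by
      have := norm_sub_norm_le (cexp (2 * π * I * (q + q * I) * (x + y * I))) (1 : ℂ)
      rw [hE, norm_one] at this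
      linarith
    have hkx : k * (-x) ≤ p * (1 - c) * (-x) := by
      rw [hk]
      have : 0 ≤ -x := by linarith
      gcongr; exact min_le_right _ _
    have hpy : p * y ≤ p := by nlinarith
    rw [div_le_iff₀ (by linarith)]
    calc Real.exp (A - p * c * x - m * y)
          ≤ Real.exp (A + |m| + p + -k * -x + -p * (x + y)) :=
          Real.exp_le_exp.2 (by nlinarith)
      _ = 2 * Real.exp (A + |m| + p) * Real.exp (-k * -x) * (1 / 2 * Real.exp (-p * (x + y))) := by
          rw [Real.exp_add, Real.exp_add]; ring
      _ ≤ _ := by gcongr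

lemma aux_kernel (q : ℝ) (hq : 0 < q) (hq2 : q ^ 2 = 1 / 2) (c₁ c₂ s : ℝ)
    (hc₁ : 0 < c₁) (hc₁' : c₁ < 1) (hc₂ : 0 < c₂) (hc₂' : c₂ < 1) :
    Integrable (fun t : ℝ => cexp (2 * π * I * (c₂ + I * (q + q * I) * s) * (c₁ + (q + q * I) * t)) /
        (cexp (2 * π * I * (c₁ + (q + q * I) * t)) - 1)) ∧
    (cexp (2 * π * I * (c₂ + I * (q + q * I) * s)) - 1) * ((q + q * I) *
      ∫ t : ℝ, cexp (2 * π * I * (c₂ + I * (q + q * I) * s) * (c₁ + (q + q * I) * t)) /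
        (cexp (2 * π * I * (c₁ + (q + q * I) * t)) - 1)) =
      cexp (2 * π * I * (c₂ + I * (q + q * I) * s)) := by
  have hq1 : q < 1 := by nlinarith
  have hq2' : (q : ℂ) ^ 2 = 1 / 2 := by
    rw [← Complex.ofReal_pow, hq2]; norm_num
  obtain ⟨k, C, hk, hC, hbd⟩ := aux_bound q hq hq2 c₂ s hc₂ hc₂'
  set v : ℂ := c₂ + I * (q + q * I) * s with hv
  set ω : ℂ := q + q * I with hω
  have hω0 : ω ≠ 0 := by
    intro h
    have := congrArg Complex.re h
    simp [hω] at this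
    exact hq.ne' this
  have hpi : (2 * π * I : ℂ) ≠ 0 := by simp [Real.pi_ne_zero]
  set G : ℂ → ℂ := fun z => cexp (2 * π * I * v * (1 + ω * z)) / (cexp (2 * π * I * ω * z) - 1)
    with hG
  set D : ℂ → ℂ := dslope (fun z => cexp (2 * π * I * ω * z)) 0 with hD
  have hD0 : D 0 = 2 * π * I * ω := by
    rw [hD, dslope_same]
    have : HasDerivAt (fun z : ℂ => cexp (2 * π * I * ω * z)) 
      (cexp (2 * π * I * ω * 0) * (2 * π * I * ω * 1)) 0 :=
      ((hasDerivAt_id (0 : ℂ)).const_mul (2 * π * I * ω)).cexp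
    rw [this.deriv]; simp
  have hDn : ∀ z : ℂ, z ≠ 0 → D z = (cexp (2 * π * I * ω * z) - 1) / z := by
    intro z hz
    rw [hD, dslope_of_ne _ hz, slope_def_field]; simp
  have hDd : Differentiable ℂ D := by
    rw [← differentiableOn_univ]
    refine (Complex.differentiableOn_dslope Filter.univ_mem).2 ?_
    rw [differentiableOn_univ]
    fun_prop
  have ha : 0 < (1 - c₁) * q := mul_pos (by linarith) hq
  have hb : 0 < c₁ * q := mul_pos hc₁ hq
  have haq : (1 - c₁) * q < q := by nlinarith
  have hbq : c₁ * q < q := by nlinarith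
  have hDne : ∀ z : ℂ, -(c₁ * q) ≤ z.im → z.im ≤ (1 - c₁) * q → D z ≠ 0 := by
    intro z h1 h2
    by_cases hz : z = 0
    · rw [hz, hD0]; exact mul_ne_zero hpi hω0
    · rw [hDn z hz]
      exact div_ne_zero (aux_den_ne q hq hq2 z hz (by linarith) (by linarith)) hz
  obtain ⟨hIntg, hres⟩ := aux_residue G (fun z => cexp (2 * π * I * v * (1 + ω * z)) / D z)
    ((1 - c₁) * q) (c₁ * q) k C 2 ha hb hk
    (fun z h1 h2 => DifferentiableAt.div (by fun_prop) (hDd z) (hDne z h1 h2))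
    (fun z hz => by
      rw [hDn z hz, hG]
      field_simp)
    (fun x y hx h1 h2 => hbd x y hx (by linarith) (by linarith))
  have e1 : ∀ t : ℝ, cexp (2 * π * I * v * (c₁ + ω * t)) / (cexp (2 * π * I * (c₁ + ω * t)) - 1) =
      G (((t - (1 - c₁) * q : ℝ) : ℂ) + ((1 - c₁) * q : ℝ) * I) := by
    intro t
    have hu : (1 : ℂ) + ω * (((t - (1 - c₁) * q : ℝ) : ℂ) + ((1 - c₁) * q : ℝ) * I) =
        c₁ + ω * t := by
      rw [hω]; push_cast
      linear_combination (-2 * (1 - c₁) : ℂ) * hq2' + (1 - c₁) * q ^ 2 * I_sq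
    have hu2 : cexp (2 * π * I * ω * (((t - (1 - c₁) * q : ℝ) : ℂ) + ((1 - c₁) * q : ℝ) * I)) =
        cexp (2 * π * I * (c₁ + ω * t)) := by
      rw [← hu, mul_add (2 * π * I) 1, mul_one, Complex.exp_add, Complex.exp_two_pi_mul_I, one_mul,
        ← mul_assoc]
    rw [hG]
    simp only
    rw [hu, hu2]
  have e2 : ∀ x : ℝ, G (x + (-(c₁ * q) : ℝ) * I) = 
      cexp (2 * π * I * v) * G (((x - q : ℝ) : ℂ) + ((1 - c₁) * q : ℝ) * I) := by
    intro x
    have hu : ω * ((x : ℂ) + (-(c₁ * q) : ℝ) * I) =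
        1 + ω * (((x - q : ℝ) : ℂ) + ((1 - c₁) * q : ℝ) * I) := by
      rw [hω]; push_cast
      linear_combination (2 : ℂ) * hq2' -  q ^ 2 * I_sq
    have hu2 : cexp (2 * π * I * ω * ((x : ℂ) + (-(c₁ * q) : ℝ) * I)) =
        cexp (2 * π * I * ω * (((x - q : ℝ) : ℂ) + ((1 - c₁) * q : ℝ) * I)) := by
      rw [mul_assoc (2 * π * I) ω, hu, mul_add (2 * π * I) 1, mul_one, Complex.exp_add,
        Complex.exp_two_pi_mul_I, one_mul, ← mul_assoc]
    rw [hG]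
    simp only
    rw [hu2, hu, ← mul_div_assoc, ← Complex.exp_add]
    congr 2
    ring
  have i2 : ∫ x : ℝ, G (x + (-(c₁ * q) : ℝ) * I) =
      cexp (2 * π * I * v) * ∫ x : ℝ, G (x + ((1 - c₁) * q : ℝ) * I) := by
    simp_rw [e2]
    rw [integral_const_mul]
    rw [integral_sub_right_eq_self (fun x : ℝ => G (x + ((1 - c₁) * q : ℝ) * I)) q]
  simp_rw [e1]
  refine ⟨hIntg.comp_sub_right ((1 - c₁) * q), ?_⟩
  rw [integral_sub_right_eq_self (fun x : ℝ => G (x + ((1 - c₁) * q : ℝ) * I)) ((1 - c₁) * q)]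
  rw [i2] at hres
  simp only [hD0, mul_zero, add_zero, mul_one] at hres
  have : (2 * π * I) * (cexp (2 * π * I * v) / (2 * π * I * ω)) = cexp (2 * π * I * v) / ω := by
    field_simp
  rw [this] at hres
  rw [eq_div_iff hω0] at hres
  linear_combination hres

lemma aux_gauss (q : ℝ) (hq2 : (q : ℂ) ^ 2 = 1 / 2) (x τ u : ℂ) (c : ℝ) (hτ : 0 < τ.re) :
    Integrable (fun s : ℝ => cexp (-(π * I * (c + I * (q + q * I) * s) ^ 2 / τ) +
      2 * π * I * x * (c + I * (q + q * I) * s) / τ + 2 * π * I * u * (c + I * (q + q * I) * s))) ∧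
    ∫ s : ℝ, cexp (-(π * I * (c + I * (q + q * I) * s) ^ 2 / τ) +
      2 * π * I * x * (c + I * (q + q * I) * s) / τ + 2 * π * I * u * (c + I * (q + q * I) * s)) =
    τ ^ (1 / 2 : ℂ) * cexp (π * I * x ^ 2 / τ) * cexp (π * I * τ * u ^ 2 + 2 * π * I * x * u) := by
  have hτ0 : τ ≠ 0 := by rintro rfl; simp at hτ
  have hpi : (π : ℂ) ≠ 0 := by simp [Real.pi_ne_zero]
  have hb : (-(π / τ)).re < 0 := by
    rw [neg_re, neg_lt_zero, div_eq_mul_inv, Complex.re_ofReal_mul, Complex.inv_re]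
    have : 0 < normSq τ := normSq_pos.2 hτ0
    have := Real.pi_pos
    positivity
  set ω : ℂ := q + q * I with hω
  have hω2 : ω ^ 2 = I := by
    rw [hω]; linear_combination (2 * I) * hq2 + q ^ 2 * I_sq
  have e : ∀ s : ℝ, -(π * I * (c + I * ω * s) ^ 2 / τ) +
      2 * π * I * x * (c + I * ω * s) / τ + 2 * π * I * u * (c + I * ω * s) =
      (-(π / τ)) * s ^ 2 + (2 * π * ω * (c / τ - x / τ - u)) * s +
        (2 * π * I * c * (x / τ + u) - π * I * c ^ 2 / τ) := by
    intro s
    linear_combination (-(π * I ^ 3 * s ^ 2 * τ⁻¹)) * hω2 - π * s ^ 2 * τ⁻¹ * I_pow_four +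
      (-2 * π * c * ω * s / τ + 2 * π * x * ω * s / τ + 2 * π * u * ω * s) * I_sq
  simp_rw [e]
  refine ⟨integrable_cexp_quadratic' hb _ _, ?_⟩
  rw [integral_cexp_quadratic hb]
  have h1 : (π : ℂ) / - -(π / τ) = τ := by field_simp
  rw [h1, mul_assoc (τ ^ (1 / 2 : ℂ)), ← Complex.exp_add]
  congr 2
  have : (2 * π * ω * (c / τ - x / τ - u)) ^ 2 = 4 * π ^ 2 * I * (c / τ - x / τ - u) ^ 2 := by
    rw [← hω2]; ring
  rw [this]
  field_simp
  ring

/-- Integral transformation formula of the Mordell integral. -/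
theorem mordell_integral_transform (x τ : ℂ) (hτ : 0 < τ.re) (c₁ c₂ : ℝ)
    (hc₁ : 0 < c₁) (hc₁' : c₁ < 1) (hc₂ : 0 < c₂) (hc₂' : c₂ < 1) :
    lineInt c₁ (π/4) (fun u =>
      Complex.exp ((π : ℂ) * Complex.I * τ * u ^ 2 + 2 * (π : ℂ) * Complex.I * x * u) /
        (Complex.exp (2 * (π : ℂ) * Complex.I * u) - 1)) =
    Complex.exp ((π : ℂ) * Complex.I * (1 / 4 - x ^ 2 / τ)) / τ ^ (1 / 2 : ℂ) *
    lineInt c₂ (3 * π / 4) (fun u =>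
      Complex.exp (-((π : ℂ) * Complex.I * u ^ 2 / τ) + 2 * (π : ℂ) * Complex.I * x * u / τ) /
        (Complex.exp (-(2 * (π : ℂ) * Complex.I * u)) - 1)) := by
  have hτ0 : τ ≠ 0 := by rintro rfl; simp at hτ
  obtain ⟨q, hqd⟩ : ∃ q : ℝ, q = √2 / 2 := ⟨_, rfl⟩
  have hq : 0 < q := by rw [hqd]; positivity
  have hq2 : q ^ 2 = 1 / 2 := by
    rw [hqd, div_pow, Real.sq_sqrt (by norm_num)]; norm_num
  have hq2' : (q : ℂ) ^ 2 = 1 / 2 := by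
    rw [← Complex.ofReal_pow, hq2]; norm_num
  have hw1 : cexp (((π / 4 : ℝ) : ℂ) * I) = q + q * I := by
    rw [Complex.exp_mul_I, ← Complex.ofReal_cos, ← Complex.ofReal_sin, Real.cos_pi_div_four,
      Real.sin_pi_div_four, hqd]
  have hw3 : cexp (((3 * π / 4 : ℝ) : ℂ) * I) = I * (q + q * I) := by
    have : ((3 * π / 4 : ℝ) : ℂ) * I = π / 2 * I + ((π / 4 : ℝ) : ℂ) * I := by
      push_cast; ring
    rw [this, Complex.exp_add, hw1, Complex.exp_pi_div_two_mul_I]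
  have hker := fun s => aux_kernel q hq hq2 c₁ c₂ s hc₁ hc₁' hc₂ hc₂'
  have hgau := fun u => aux_gauss q hq2' x τ u c₂ hτ
  unfold lineInt
  rw [hw1, hw3]
  have hexp0 : cexp (π * I * (1 / 4 - x ^ 2 / τ)) = (q + q * I) * (cexp (π * I * x ^ 2 / τ))⁻¹ := by
    rw [← hw1, ← Complex.exp_neg, ← Complex.exp_add]
    congr 1
    push_cast
    ring
  rw [hexp0]
  set ω : ℂ := q + q * I with hω
  have hω2 : ω ^ 2 = I := by
    rw [hω]; linear_combination (2 * I) * hq2' + q ^ 2 * I_sq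
  have hsq : τ ^ (1 / 2 : ℂ) ≠ 0 := by simp [Complex.cpow_eq_zero_iff, hτ0]
  set B : ℂ := cexp (π * I * x ^ 2 / τ) with hB
  have hB0 : B ≠ 0 := Complex.exp_ne_zero _
  set P : ℝ → ℂ := fun s => cexp (-(π * I * (c₂ + I * ω * s) ^ 2 / τ) +
      2 * π * I * x * (c₂ + I * ω * s) / τ) with hP
  set Kf : ℝ → ℝ → ℂ := fun t s => P s * (cexp (2 * π * I * (c₂ + I * ω * s) * (c₁ + ω * t)) /
        (cexp (2 * π * I * (c₁ + ω * t)) - 1)) with hKf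
  have hKint : Integrable (Function.uncurry Kf) (volume.prod volume) := by
    have i1 := (hker 0).1
    have i2 := (hgau c₁).1
    have i3 := i1.mul_prod i2
    have hfac : Function.uncurry Kf = fun z : ℝ × ℝ =>
        cexp (((-(2 * π * (z.1 * z.2 + c₁ * c₂)) : ℝ) : ℂ) * I) *
        ((cexp (2 * π * I * (c₂ + I * ω * (0 : ℝ)) * (c₁ + ω * z.1)) /
          (cexp (2 * π * I * (c₁ + ω * z.1)) - 1)) *
        cexp (-(π * I * (c₂ + I * ω * z.2) ^ 2 / τ) +
          2 * π * I * x * (c₂ + I * ω * z.2) / τ + 2 * π * I * c₁ * (c₂ + I * ω * z.2))) := by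
      ext ⟨t, s⟩
      simp only [Function.uncurry, hKf, hP]
      rw [← mul_div_assoc, div_mul_eq_mul_div, ← mul_div_assoc, ← Complex.exp_add,
        ← Complex.exp_add, ← Complex.exp_add]
      congr 2
      push_cast
      linear_combination (2 * π * I * I * t * s) * hω2 + (2 * π * I * t * s) * I_sq
    rw [hfac]
    refine i3.norm.mono' ?_ ?_
    · exact (Continuous.aestronglyMeasurable (by fun_prop)).mul i3.aestronglyMeasurable
    · refine Filter.Eventually.of_forall fun z => ?_
      rw [norm_mul, Complex.norm_exp_ofReal_mul_I, one_mul]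
  have hswap := integral_integral_swap hKint
  have hL : ∀ t : ℝ, ∫ s, Kf t s = τ ^ (1 / 2 : ℂ) * B *
      (cexp (π * I * τ * (c₁ + ω * t) ^ 2 + 2 * π * I * x * (c₁ + ω * t)) /
        (cexp (2 * π * I * (c₁ + ω * t)) - 1)) := by
    intro t
    rw [← mul_div_assoc, ← (hgau (c₁ + ω * t)).2, ← integral_div]
    congr 1
    ext s
    simp only [hKf, hP]
    rw [← mul_div_assoc, ← Complex.exp_add]
    congr 2
    ring
  have hR : ∀ s : ℝ, ω * ∫ t, Kf t s = -(P s / (cexp (-(2 * π * I * (c₂ + I * ω * s))) - 1)) := by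
    intro s
    simp only [hKf]
    rw [integral_const_mul]
    have hk := (hker s).2
    set J := ∫ t : ℝ, cexp (2 * π * I * (c₂ + I * ω * s) * (c₁ + ω * t)) /
        (cexp (2 * π * I * (c₁ + ω * t)) - 1) with hJ
    rw [Complex.exp_neg]
    have hX0 := Complex.exp_ne_zero (2 * π * I * (c₂ + I * ω * s))
    set X := cexp (2 * π * I * (c₂ + I * ω * s)) with hX
    have hX1 : X - 1 ≠ 0 := by
      intro h
      rw [h, zero_mul] at hk
      exact hX0 hk.symm
    have hX2 : X⁻¹ - 1 ≠ 0 := by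
      intro h
      apply hX1
      have : X⁻¹ = 1 := by linear_combination h
      rw [inv_eq_one] at this
      rw [this]; ring
    rw [← neg_div, eq_div_iff hX2]
    have : X⁻¹ - 1 = -(X - 1) * X⁻¹ := by field_simp; ring
    rw [this]
    have h2 : X * X⁻¹ = 1 := mul_inv_cancel₀ hX0
    linear_combination (-P s * X⁻¹) * hk - P s * h2
  simp_rw [hL] at hswap
  rw [integral_const_mul] at hswap
  have hR2 : ω * ∫ s, ∫ t, Kf t s = -∫ s, P s / (cexp (-(2 * π * I * (c₂ + I * ω * s))) - 1) := by
    rw [← integral_const_mul, ← integral_neg]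
    simp_rw [hR]
  rw [integral_mul_const, integral_mul_const]
  rw [← hswap] at hR2
  simp only [hP] at hR2
  rw [eq_comm, neg_eq_iff_eq_neg] at hR2
  rw [hR2]
  generalize (∫ a : ℝ, cexp (π * I * τ * (c₁ + ω * a) ^ 2 + 2 * π * I * x * (c₁ + ω * a)) /
    (cexp (2 * π * I * (c₁ + ω * a)) - 1)) = L
  have h1 : ω * B⁻¹ / τ ^ (1 / 2 : ℂ) * (-(ω * (τ ^ (1 / 2 : ℂ) * B * L)) * (I * ω)) =
      -(ω ^ 2 * I * ω * L) * (B⁻¹ * B) * (τ ^ (1 / 2 : ℂ) / τ ^ (1 / 2 : ℂ)) := by ring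
  rw [h1, inv_mul_cancel₀ hB0, div_self hsq, hω2]
  linear_combination (ω * L) * I_sq
end

section
/- Let s be a complex number with Re(s) > 0 and let u be a complex number with Re(e^{iπ/4}·u) > 0. Then the integral of e^{2πizu}·z^{s−1} dz along the ray from 0 to e^{3πi/4}·∞, i.e. ∫_0^∞ e^{2πi·u·e^{3πi/4}·r}·(e^{3πi/4}·r)^{s−1}·e^{3πi/4} dr, converges and equals e^{iπs/2}·(2π)^{−s}·Γ(s)·u^{−s}. -/
open scoped Real
open MeasureTheory Set Complex

/-- Real dominating function. -/
lemma ray_dom {q b : ℝ} (hq : -1 < q) (hb : 0 < b) :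
    IntegrableOn (fun r : ℝ => r ^ q * Real.exp (-b * r)) (Ioi 0) := by
  have h := integrableOn_rpow_mul_exp_neg_mul_rpow (p := 1) hq one_pos hb
  simpa using h

lemma ray_meas (s w : ℂ) : AEStronglyMeasurable
    (fun r : ℝ => (r : ℂ) ^ s * Complex.exp (-(w * r))) (volume.restrict (Ioi 0)) := by
  refine ContinuousOn.aestronglyMeasurable ?_ measurableSet_Ioi
  intro r hr
  have h1 : ContinuousAt (fun r : ℝ => (r : ℂ) ^ s) r :=
    continuousAt_ofReal_cpow_const _ _ (Or.inr (ne_of_gt hr))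
  have h2 : ContinuousAt (fun r : ℝ => Complex.exp (-(w * r))) r := by fun_prop
  exact (h1.mul h2).continuousWithinAt

lemma ray_norm (s w : ℂ) {r : ℝ} (hr : 0 < r) :
    ‖(r : ℂ) ^ s * Complex.exp (-(w * r))‖ = r ^ s.re * Real.exp (-w.re * r) := by
  rw [norm_mul, norm_cpow_eq_rpow_re_of_pos hr, Complex.norm_exp]
  simp

lemma ray_int (s w : ℂ) (hs : -1 < s.re) (hw : 0 < w.re) :
    IntegrableOn (fun r : ℝ => (r : ℂ) ^ s * Complex.exp (-(w * r))) (Ioi 0) := by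
  refine Integrable.mono' (ray_dom hs hw) (ray_meas s w) ?_
  refine (ae_restrict_iff' measurableSet_Ioi).mpr (Filter.Eventually.of_forall fun r hr => ?_)
  exact (ray_norm s w hr).le

lemma ray_diff (s w : ℂ) (hs : -1 < s.re) (hw : 0 < w.re) :
    DifferentiableAt ℂ (fun w : ℂ => ∫ r in Ioi (0 : ℝ),
      (r : ℂ) ^ s * Complex.exp (-(w * r))) w := by
  have hb : 0 < w.re / 2 := by linarith
  have hmem : {z : ℂ | w.re / 2 < z.re} ∈ nhds w :=
    (isOpen_lt continuous_const Complex.continuous_re).mem_nhds (by simp; linarith)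
  have key := hasDerivAt_integral_of_dominated_loc_of_deriv_le
    (μ := volume.restrict (Ioi (0 : ℝ)))
    (F := fun (z : ℂ) (r : ℝ) => (r : ℂ) ^ s * Complex.exp (-(z * r)))
    (F' := fun (z : ℂ) (r : ℝ) => (r : ℂ) ^ s * (Complex.exp (-(z * r)) * (-(r : ℂ))))
    (bound := fun r : ℝ => r ^ (s.re + 1) * Real.exp (-(w.re / 2) * r))
    hmem (Filter.Eventually.of_forall fun z => ray_meas s z) (ray_int s w hs hw) ?_ ?_
    (ray_dom (by linarith) hb) ?_
  · exact key.2.differentiableAt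
  · have h := (ray_meas s w).mul
      (Complex.continuous_ofReal.neg.aestronglyMeasurable (μ := volume.restrict (Ioi (0 : ℝ))))
    refine h.congr (Filter.Eventually.of_forall fun r => ?_)
    simp [mul_assoc]
  · refine (ae_restrict_iff' measurableSet_Ioi).mpr (Filter.Eventually.of_forall fun r hr z hz => ?_)
    have hr' : (0 : ℝ) < r := hr
    have hz' : w.re / 2 < z.re := hz
    rw [← mul_assoc, norm_mul, ray_norm s z hr', norm_neg, Complex.norm_of_nonneg hr'.le,
      Real.rpow_add_one hr'.ne']
    have : Real.exp (-z.re * r) ≤ Real.exp (-(w.re / 2) * r) := by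
      apply Real.exp_le_exp.mpr
      nlinarith
    have h3 : 0 ≤ r ^ s.re * r := by positivity
    nlinarith [mul_le_mul_of_nonneg_left this h3]
  · refine Filter.Eventually.of_forall fun r z _ => ?_
    have h1 : HasDerivAt (fun z : ℂ => -(z * (r : ℂ))) (-(r : ℂ)) z := by
      have h0 := (hasDerivAt_id' z).mul_const (-(r : ℂ))
      simpa only [mul_neg, one_mul] using h0
    exact (h1.cexp).const_mul _

lemma ray_gamma (s w : ℂ) (hs : 0 < s.re) (hw : 0 < w.re) :
    ∫ r in Ioi (0 : ℝ), (r : ℂ) ^ (s - 1) * Complex.exp (-(w * r)) =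
      w ^ (-s) * Complex.Gamma s := by
  have hopen : IsOpen {z : ℂ | 0 < z.re} := isOpen_lt continuous_const Complex.continuous_re
  have hconv : IsPreconnected {z : ℂ | 0 < z.re} := (convex_halfSpace_re_gt 0).isPreconnected
  have hf : AnalyticOnNhd ℂ (fun w : ℂ => ∫ r in Ioi (0 : ℝ),
      (r : ℂ) ^ (s - 1) * Complex.exp (-(w * r))) {z : ℂ | 0 < z.re} :=
    DifferentiableOn.analyticOnNhd
      (fun z hz => (ray_diff (s - 1) z (by simpa using hs) hz).differentiableWithinAt) hopen
  have hg : AnalyticOnNhd ℂ (fun w : ℂ => w ^ (-s) * Complex.Gamma s) {z : ℂ | 0 < z.re} := by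
    refine DifferentiableOn.analyticOnNhd (fun z hz => ?_) hopen
    have hz' : z ∈ slitPlane := Or.inl hz
    exact ((differentiableAt_id.cpow_const hz').mul_const _).differentiableWithinAt
  refine hf.eqOn_of_preconnected_of_frequently_eq hg hconv (z₀ := 1) (by simp) ?_ hw
  have htend : Filter.Tendsto (fun x : ℝ => (x : ℂ)) (nhdsWithin 1 (Ioi 1))
      (nhdsWithin (1 : ℂ) {1}ᶜ) := by
    refine tendsto_nhdsWithin_iff.mpr ⟨?_, ?_⟩
    · have := Complex.continuous_ofReal.tendsto (1 : ℝ)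
      rw [Complex.ofReal_one] at this
      exact this.mono_left nhdsWithin_le_nhds
    · filter_upwards [self_mem_nhdsWithin] with x hx
      have hx' : (1 : ℝ) < x := hx
      simpa using hx'.ne'
  refine htend.frequently (Filter.Eventually.frequently ?_)
  filter_upwards [self_mem_nhdsWithin] with x hx
  have hx' : (1 : ℝ) < x := hx
  have hx0 : (0 : ℝ) < x := by linarith
  rw [integral_cpow_mul_exp_neg_mul_Ioi hs hx0, one_div,
    inv_cpow _ _ (by rw [arg_ofReal_of_nonneg hx0.le]; exact Real.pi_pos.ne), cpow_neg]

/-- Power of a product with a positive real part and a rotation. -/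
lemma ray_pow (s u : ℂ) (hu : 0 < (Complex.exp ((π : ℂ) * Complex.I / 4) * u).re) :
    (2 * (π : ℂ) * (Complex.exp ((π : ℂ) * Complex.I / 4) * u)) ^ (-s) =
      (2 * (π : ℂ)) ^ (-s) * (Complex.exp (-((π : ℂ) * Complex.I * s / 4)) * u ^ (-s)) := by
  set v := Complex.exp ((π : ℂ) * Complex.I / 4) * u with hv
  have hv0 : v ≠ 0 := by
    intro h
    simp [h] at hu
  have hu0 : u ≠ 0 := by
    intro h
    simp [hv, h] at hv0
  have harg : |v.arg| < π / 2 := Complex.abs_arg_lt_pi_div_two_iff.mpr (Or.inl hu)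
  have harg' := abs_lt.mp harg
  have hpi := Real.pi_pos
  have hlog : Complex.log u = Complex.log v - (π : ℂ) * Complex.I / 4 := by
    have hue : u = Complex.exp (Complex.log v - (π : ℂ) * Complex.I / 4) := by
      rw [Complex.exp_sub, Complex.exp_log hv0, hv]
      field_simp
    have him : (Complex.log v - (π : ℂ) * Complex.I / 4).im = v.arg - π / 4 := by
      have : (π : ℂ) * Complex.I / 4 = ((π / 4 : ℝ) : ℂ) * Complex.I := by push_cast; ring
      rw [this, Complex.sub_im, Complex.log_im, Complex.im_ofReal_mul, Complex.I_im, mul_one]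
    conv_lhs => rw [hue]
    apply Complex.log_exp
    · rw [him]; linarith
    · rw [him]; linarith
  have h2 : (2 * (π : ℂ)) = ((2 * π : ℝ) : ℂ) := by push_cast; ring
  have hvc : v ^ (-s) = Complex.exp (-((π : ℂ) * Complex.I * s / 4)) * u ^ (-s) := by
    rw [cpow_def_of_ne_zero hv0, cpow_def_of_ne_zero hu0, hlog, ← Complex.exp_add]
    congr 1
    ring
  rw [← hvc, h2, cpow_def_of_ne_zero (mul_ne_zero (by exact_mod_cast (by positivity : 2 * π ≠ 0)) hv0),
    Complex.log_ofReal_mul (by positivity) hv0, cpow_def_of_ne_zero hv0,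
    cpow_def_of_ne_zero (by exact_mod_cast (by positivity : 2 * π ≠ 0)), ← Complex.exp_add,
    ← Complex.ofReal_log (by positivity)]
  congr 1
  ring

/-- Mellin-type integral along the ray from `0` to `e^{3πi/4}·∞`:
for `Re s > 0` and `Re (e^{iπ/4} u) > 0` it converges and evaluates to
`e^{iπs/2}·(2π)^{-s}·Γ(s)·u^{-s}`. -/
theorem ray_integral_mellin (s u : ℂ) (hs : 0 < s.re)
    (hu : 0 < (Complex.exp ((π : ℂ) * Complex.I / 4) * u).re) :
    MeasureTheory.IntegrableOn (fun r : ℝ =>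
      Complex.exp (2 * (π : ℂ) * Complex.I * u *
          (Complex.exp (3 * (π : ℂ) * Complex.I / 4) * (r : ℂ))) *
        (Complex.exp (3 * (π : ℂ) * Complex.I / 4) * (r : ℂ)) ^ (s - 1) *
        Complex.exp (3 * (π : ℂ) * Complex.I / 4)) (Set.Ioi (0 : ℝ)) ∧
    (∫ r in Set.Ioi (0 : ℝ),
      Complex.exp (2 * (π : ℂ) * Complex.I * u *
          (Complex.exp (3 * (π : ℂ) * Complex.I / 4) * (r : ℂ))) *
        (Complex.exp (3 * (π : ℂ) * Complex.I / 4) * (r : ℂ)) ^ (s - 1) *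
        Complex.exp (3 * (π : ℂ) * Complex.I / 4)) =
      Complex.exp ((π : ℂ) * Complex.I * s / 2) * (2 * (π : ℂ)) ^ (-s) *
        Complex.Gamma s * u ^ (-s) := by
  have hI : Complex.exp ((π : ℂ) * Complex.I) = -1 := Complex.exp_pi_mul_I
  have hpi := Real.pi_pos
  set w : ℂ := 2 * (π : ℂ) * (Complex.exp ((π : ℂ) * Complex.I / 4) * u) with hw
  have hw0 : 0 < w.re := by
    have : w = ((2 * π : ℝ) : ℂ) * (Complex.exp ((π : ℂ) * Complex.I / 4) * u) := by
      rw [hw]; push_cast; ring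
    rw [this, Complex.re_ofReal_mul]
    positivity
  have hrot : Complex.I * Complex.exp (3 * (π : ℂ) * Complex.I / 4) =
      -Complex.exp ((π : ℂ) * Complex.I / 4) := by
    have e1 : Complex.exp ((π : ℂ) / 2 * Complex.I) = Complex.I := Complex.exp_pi_div_two_mul_I
    calc Complex.I * Complex.exp (3 * (π : ℂ) * Complex.I / 4)
        = Complex.exp ((π : ℂ) / 2 * Complex.I) * Complex.exp (3 * (π : ℂ) * Complex.I / 4) := by
          rw [e1]
      _ = Complex.exp ((π : ℂ) * Complex.I) * Complex.exp ((π : ℂ) * Complex.I / 4) := by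
          rw [← Complex.exp_add, ← Complex.exp_add]
          congr 1
          ring
      _ = _ := by rw [hI]; ring
  have hpt : ∀ r ∈ Ioi (0 : ℝ), Complex.exp (2 * (π : ℂ) * Complex.I * u *
          (Complex.exp (3 * (π : ℂ) * Complex.I / 4) * (r : ℂ))) *
        (Complex.exp (3 * (π : ℂ) * Complex.I / 4) * (r : ℂ)) ^ (s - 1) *
        Complex.exp (3 * (π : ℂ) * Complex.I / 4) =
      Complex.exp (3 * (π : ℂ) * Complex.I * s / 4) *
        ((r : ℂ) ^ (s - 1) * Complex.exp (-(w * r))) := by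
    intro r hr
    have hr' : (0 : ℝ) < r := hr
    have hrc : (r : ℂ) ≠ 0 := by exact_mod_cast hr'.ne'
    have hexp : 2 * (π : ℂ) * Complex.I * u *
        (Complex.exp (3 * (π : ℂ) * Complex.I / 4) * (r : ℂ)) = -(w * r) := by
      rw [hw]
      linear_combination (2 * (π : ℂ) * u * r) * hrot
    have him : (3 * (π : ℂ) * Complex.I / 4).im = 3 * π / 4 := by
      have : 3 * (π : ℂ) * Complex.I / 4 = ((3 * π / 4 : ℝ) : ℂ) * Complex.I := by
        push_cast; ring
      rw [this, Complex.im_ofReal_mul, Complex.I_im, mul_one]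
    have hlog : Complex.log (Complex.exp (3 * (π : ℂ) * Complex.I / 4)) =
        3 * (π : ℂ) * Complex.I / 4 := by
      apply Complex.log_exp
      · rw [him]; linarith
      · rw [him]; linarith
    have hpow : (Complex.exp (3 * (π : ℂ) * Complex.I / 4) * (r : ℂ)) ^ (s - 1) =
        (r : ℂ) ^ (s - 1) * Complex.exp (3 * (π : ℂ) * Complex.I / 4 * (s - 1)) := by
      rw [mul_comm, cpow_def_of_ne_zero (mul_ne_zero hrc (Complex.exp_ne_zero _)),
        Complex.log_ofReal_mul hr' (Complex.exp_ne_zero _), hlog, cpow_def_of_ne_zero hrc,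
        ← Complex.exp_add, ← Complex.ofReal_log hr'.le]
      congr 1
      ring
    have hfac : Complex.exp (3 * (π : ℂ) * Complex.I * s / 4) =
        Complex.exp (3 * (π : ℂ) * Complex.I / 4 * (s - 1)) *
          Complex.exp (3 * (π : ℂ) * Complex.I / 4) := by
      rw [← Complex.exp_add]
      congr 1
      ring
    rw [hexp, hpow, hfac]
    ring
  constructor
  · have h := (ray_int (s - 1) w (by simpa using hs) hw0).const_mul
      (Complex.exp (3 * (π : ℂ) * Complex.I * s / 4))
    exact IntegrableOn.congr_fun h (fun r hr => (hpt r hr).symm) measurableSet_Ioi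
  · rw [setIntegral_congr_fun measurableSet_Ioi hpt, integral_const_mul, ray_gamma s w hs hw0,
      hw, ray_pow s u hu]
    have hfac : Complex.exp ((π : ℂ) * Complex.I * s / 2) =
        Complex.exp (3 * (π : ℂ) * Complex.I * s / 4) *
          Complex.exp (-((π : ℂ) * Complex.I * s / 4)) := by
      rw [← Complex.exp_add]
      congr 1
      ring
    rw [hfac]
    ring
end

section
/- Let s be a complex number with Re(s) > 0 and let v be any complex number. Then the integral of e^{−iπz² + 2πivz}·z^{s−1} dz along the ray from 0 to e^{3πi/4}·∞, i.e. ∫_0^∞ e^{−πr² + 2πi·v·e^{3πi/4}·r}·(e^{3πi/4}·r)^{s−1}·e^{3πi/4} dr, converges and equals (2π)^{−s/2}·e^{3iπs/4}·∫_0^∞ e^{−w²/2 − √(2π)·e^{iπ/4}·v·w}·w^{s−1} dw. (Equivalently, it equals (2π)^{−s/2}·Γ(s)·e^{3iπs/4 + iπv²/2}·U(s − 1/2, √(2π)·e^{iπ/4}·v), where U is the parabolic cylinder function expressed through its real integral representation.) -/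
open scoped Real
open MeasureTheory Set Complex

lemma ray_aux_integrable (s a : ℂ) (hs : 0 < s.re) :
    IntegrableOn (fun r : ℝ => Complex.exp (-((π : ℂ) * (r : ℂ) ^ 2) + a * (r : ℂ)) *
      (r : ℂ) ^ (s - 1)) (Set.Ioi (0 : ℝ)) := by
  have h1 : IntegrableOn (fun r : ℝ => Real.exp (a.re ^ 2) *
      (r ^ (s.re - 1) * Real.exp (-1 * r ^ 2))) (Set.Ioi (0 : ℝ)) :=
    (integrableOn_rpow_mul_exp_neg_mul_sq one_pos (by linarith)).const_mul _
  refine Integrable.mono' h1 ?_ ?_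
  · refine ContinuousOn.aestronglyMeasurable ?_ measurableSet_Ioi
    refine ContinuousOn.mul (by fun_prop) ?_
    intro r hr
    exact ((continuousAt_ofReal_cpow_const r (s - 1) (Or.inr (ne_of_gt hr)))).continuousWithinAt
  · filter_upwards [ae_restrict_mem measurableSet_Ioi] with r hr
    have hr' : 0 < r := hr
    rw [norm_mul, Complex.norm_exp, Complex.norm_cpow_eq_rpow_re_of_pos hr']
    have e1 : (-((π : ℂ) * (r : ℂ) ^ 2) + a * (r : ℂ)).re = -(π * r ^ 2) + a.re * r := by
      rw [← Complex.ofReal_pow, ← Complex.ofReal_mul, Complex.add_re, Complex.neg_re,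
        Complex.ofReal_re, Complex.re_mul_ofReal]
    have e2 : (s - 1).re = s.re - 1 := by simp
    rw [e1, e2]
    have h3 : Real.exp (-(π * r ^ 2) + a.re * r) ≤
        Real.exp (a.re ^ 2) * Real.exp (-1 * r ^ 2) := by
      rw [← Real.exp_add, Real.exp_le_exp]
      nlinarith [Real.pi_gt_three, sq_nonneg (a.re - r), sq_nonneg r, sq_nonneg a.re,
        mul_nonneg (sub_nonneg.2 Real.pi_gt_three.le) (sq_nonneg r)]
    calc _ ≤ (Real.exp (a.re ^ 2) * Real.exp (-1 * r ^ 2)) * r ^ (s.re - 1) := by gcongr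
      _ = _ := by ring

lemma ray_aux_pow (s : ℂ) {r : ℝ} (hr : 0 < r) :
    (Complex.exp (3 * (π : ℂ) * Complex.I / 4) * (r : ℂ)) ^ (s - 1) *
        Complex.exp (3 * (π : ℂ) * Complex.I / 4) =
      Complex.exp (3 * (π : ℂ) * Complex.I * s / 4) * (r : ℂ) ^ (s - 1) := by
  have h0 : (r : ℂ) ≠ 0 := by exact_mod_cast hr.ne'
  have hl : Complex.log (Complex.exp (3 * (π : ℂ) * Complex.I / 4)) =
      3 * (π : ℂ) * Complex.I / 4 := by
    have e : (3 * (π : ℂ) * Complex.I / 4) = ((3 * π / 4 : ℝ) : ℂ) * Complex.I := by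
      push_cast; ring
    rw [e]
    apply Complex.log_exp
    · simp; linarith [Real.pi_pos]
    · simp; linarith [Real.pi_pos]
  rw [mul_comm (Complex.exp _) (r : ℂ), Complex.cpow_def_of_ne_zero (by simp [h0]),
    Complex.log_ofReal_mul hr (Complex.exp_ne_zero _), hl, Complex.cpow_def_of_ne_zero h0,
    Complex.ofReal_log hr.le, ← Complex.exp_add, ← Complex.exp_add]
  congr 1
  ring

/-- Gaussian integral along the ray from `0` to `e^{3πi/4}·∞`: for `Re s > 0` and any
complex `v` it converges and equals `(2π)^{-s/2}·e^{3iπs/4}` times the real integral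
representation of `Γ(s)·e^{iπv²/2}·U(s - 1/2, √(2π)·e^{iπ/4}·v)`. -/
theorem ray_integral_parabolic_cylinder (s v : ℂ) (hs : 0 < s.re) :
    MeasureTheory.IntegrableOn (fun r : ℝ =>
      Complex.exp (-((π : ℂ) * (r : ℂ) ^ 2) + 2 * (π : ℂ) * Complex.I * v *
          (Complex.exp (3 * (π : ℂ) * Complex.I / 4) * (r : ℂ))) *
        (Complex.exp (3 * (π : ℂ) * Complex.I / 4) * (r : ℂ)) ^ (s - 1) *
        Complex.exp (3 * (π : ℂ) * Complex.I / 4)) (Set.Ioi (0 : ℝ)) ∧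
    (∫ r in Set.Ioi (0 : ℝ),
      Complex.exp (-((π : ℂ) * (r : ℂ) ^ 2) + 2 * (π : ℂ) * Complex.I * v *
          (Complex.exp (3 * (π : ℂ) * Complex.I / 4) * (r : ℂ))) *
        (Complex.exp (3 * (π : ℂ) * Complex.I / 4) * (r : ℂ)) ^ (s - 1) *
        Complex.exp (3 * (π : ℂ) * Complex.I / 4)) =
      (2 * (π : ℂ)) ^ (-s / 2) * Complex.exp (3 * (π : ℂ) * Complex.I * s / 4) *
        ∫ w in Set.Ioi (0 : ℝ),
          Complex.exp (-((w : ℂ) ^ 2 / 2) -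
              (Real.sqrt (2 * π) : ℂ) * Complex.exp ((π : ℂ) * Complex.I / 4) * v * (w : ℂ)) *
            (w : ℂ) ^ (s - 1) := by
  set E := Complex.exp (3 * (π : ℂ) * Complex.I / 4) with hE
  have hpt : ∀ r ∈ Set.Ioi (0 : ℝ),
      Complex.exp (-((π : ℂ) * (r : ℂ) ^ 2) + 2 * (π : ℂ) * Complex.I * v * (E * (r : ℂ))) *
        (E * (r : ℂ)) ^ (s - 1) * E =
      Complex.exp (3 * (π : ℂ) * Complex.I * s / 4) *
        (Complex.exp (-((π : ℂ) * (r : ℂ) ^ 2) + (2 * (π : ℂ) * Complex.I * v * E) * (r : ℂ)) *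
          (r : ℂ) ^ (s - 1)) := by
    intro r hr
    rw [mul_assoc, hE, ray_aux_pow s hr]
    ring_nf
  constructor
  · rw [integrableOn_congr_fun hpt measurableSet_Ioi]
    exact (ray_aux_integrable s _ hs).const_mul _
  · rw [setIntegral_congr_fun measurableSet_Ioi hpt, integral_const_mul]
    have hc : 0 < Real.sqrt (2 * π) := Real.sqrt_pos.2 (by positivity)
    have hcc : ((Real.sqrt (2 * π) : ℝ) : ℂ) ^ 2 = 2 * π := by
      rw [← Complex.ofReal_pow, Real.sq_sqrt (by positivity)]; push_cast; ring
    have hrot : Complex.I * E = -Complex.exp ((π : ℂ) * Complex.I / 4) := by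
      have e5 : (3 * (π : ℂ) * Complex.I / 4) =
        (π : ℂ) / 2 * Complex.I + (π : ℂ) * Complex.I / 4 := by ring
      rw [hE, e5, Complex.exp_add, Complex.exp_pi_div_two_mul_I, ← mul_assoc, Complex.I_mul_I]
      ring
    set c := Real.sqrt (2 * π) with hcdef
    have hc0 : (c : ℂ) ≠ 0 := by exact_mod_cast hc.ne'
    have hpow : (2 * (π : ℂ)) ^ (-s / 2) = (c : ℂ)⁻¹ * ((c : ℂ) ^ (s - 1))⁻¹ := by
      have hl : Complex.log (2 * (π : ℂ)) = 2 * Complex.log (c : ℂ) := by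
        have e6 : (2 * (π : ℂ)) = ((c ^ 2 : ℝ) : ℂ) := by rw [← hcc]; push_cast; rfl
        rw [e6, ← Complex.ofReal_log (by positivity), ← Complex.ofReal_log hc.le, Real.log_pow]
        push_cast; rfl
      rw [Complex.cpow_sub _ _ hc0, Complex.cpow_one,
        Complex.cpow_def_of_ne_zero (by rw [← hcc]; exact pow_ne_zero 2 hc0), hl]
      have e7 : 2 * Complex.log (c : ℂ) * (-s / 2) = -(Complex.log (c : ℂ) * s) := by ring
      rw [e7, Complex.exp_neg, ← Complex.cpow_def_of_ne_zero hc0]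
      field_simp
    have hcomp := integral_comp_mul_left_Ioi (fun w : ℝ => Complex.exp (-((w : ℂ) ^ 2 / 2) -
              (c : ℂ) * Complex.exp ((π : ℂ) * Complex.I / 4) * v * (w : ℂ)) *
            (w : ℂ) ^ (s - 1)) 0 hc
    rw [mul_zero] at hcomp
    have hcp : (c : ℂ) ^ (s - 1) ≠ 0 := by simp [Complex.cpow_eq_zero_iff, hc0]
    have hpt2 : ∀ r ∈ Set.Ioi (0 : ℝ),
        Complex.exp (-(((c * r : ℝ) : ℂ) ^ 2 / 2) -
              (c : ℂ) * Complex.exp ((π : ℂ) * Complex.I / 4) * v * ((c * r : ℝ) : ℂ)) *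
            ((c * r : ℝ) : ℂ) ^ (s - 1) =
        (c : ℂ) ^ (s - 1) *
        (Complex.exp (-((π : ℂ) * (r : ℂ) ^ 2) + (2 * (π : ℂ) * Complex.I * v * E) * (r : ℂ)) *
          (r : ℂ) ^ (s - 1)) := by
      intro r hr
      have hr' : 0 < r := hr
      rw [Complex.ofReal_mul, Complex.mul_cpow_ofReal_nonneg hc.le hr'.le]
      have e8 : -(((c : ℂ) * r) ^ 2 / 2) -
              (c : ℂ) * Complex.exp ((π : ℂ) * Complex.I / 4) * v * ((c : ℂ) * r) =
          -((π : ℂ) * (r : ℂ) ^ 2) + (2 * (π : ℂ) * Complex.I * v * E) * (r : ℂ) := by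
        linear_combination (-(r : ℂ) ^ 2 / 2 - Complex.exp ((π : ℂ) * Complex.I / 4) * v * r) * hcc
          - 2 * (π : ℂ) * v * r * hrot
      rw [e8]
      ring
    rw [setIntegral_congr_fun measurableSet_Ioi hpt2, integral_const_mul] at hcomp
    rw [hpow]
    rw [Complex.real_smul, Complex.ofReal_inv] at hcomp
    have hJ := congrArg (fun x : ℂ => ((c : ℂ) ^ (s - 1))⁻¹ * x) hcomp
    simp only [inv_mul_cancel_left₀ hcp] at hJ
    rw [hJ]
    ring
end

section
/- Let x, τ be complex numbers with Re(τ) > 0, and let c₁, c₂ be real numbers with 0 < c₁ < 1 and 0 < c₂ < 1. Then ∫_{t ∈ ℝ} (e^{iπτ(c₁ + e^{iπ/4}t)² + 2πix(c₁ + e^{iπ/4}t)}/(e^{2πi(c₁ + e^{iπ/4}t)} − 1))·e^{iπ/4} dt = ∫_{t ∈ ℝ} (e^{iπτ(c₂ + e^{iπ/4}t)² + 2πix(c₂ + e^{iπ/4}t)}/(e^{2πi(c₂ + e^{iπ/4}t)} − 1))·e^{iπ/4} dt; that is, the value of the Mordell integral Φ(x, τ) does not depend on where the slope-1 integration line crosses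 the real axis within the interval (0, 1). -/
open scoped Real
open MeasureTheory Set Complex

/-- The integrand in the rotated coordinate. -/
noncomputable def mG (x τ w z : ℂ) : ℂ :=
  Complex.exp ((π : ℂ) * Complex.I * τ * (w * z) ^ 2 + 2 * (π : ℂ) * Complex.I * x * (w * z)) /
    (Complex.exp (2 * (π : ℂ) * Complex.I * (w * z)) - 1) * w

lemma mG_num_bound (x τ w : ℂ) (hτ : 0 < τ.re) (hw2 : w ^ 2 = Complex.I) :
    ∃ C : ℝ, 0 < C ∧ ∀ t y : ℝ, |y| ≤ 1 →
      ‖Complex.exp ((π : ℂ) * Complex.I * τ * (w * (t + y * Complex.I)) ^ 2 +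
        2 * (π : ℂ) * Complex.I * x * (w * (t + y * Complex.I)))‖
        ≤ C * Real.exp (-(π * τ.re / 2) * t ^ 2) := by
  set b : ℂ := 2 * (π : ℂ) * Complex.I * x * w with hb
  set a : ℝ := π * τ.re / 2 with ha
  have ha0 : 0 < a := by have := Real.pi_pos; positivity
  set K : ℝ := 2 * π * |τ.im| + ‖b‖ with hK
  refine ⟨Real.exp (K ^ 2 / (4 * a) + 2 * a + ‖b‖), Real.exp_pos _, fun t y hy => ?_⟩
  have e : (π : ℂ) * Complex.I * τ * (w * (t + y * Complex.I)) ^ 2 +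
        2 * (π : ℂ) * Complex.I * x * (w * (t + y * Complex.I)) =
      -(π : ℂ) * (τ * (t + y * Complex.I) ^ 2) + b * (t + y * Complex.I) := by
    rw [mul_pow, hw2, hb]
    linear_combination (π : ℂ) * τ * (t + y * Complex.I) ^ 2 * Complex.I_sq
  rw [e, Complex.norm_exp, ← Real.exp_add, Real.exp_le_exp, Complex.add_re]
  have h1 : (b * (t + y * Complex.I)).re ≤ ‖b‖ * (|t| + 1) := by
    refine (Complex.re_le_norm _).trans ?_
    rw [norm_mul]
    refine mul_le_mul_of_nonneg_left ((norm_add_le _ _).trans ?_) (norm_nonneg _)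
    simpa using hy
  have h2 : (-(π : ℂ) * (τ * (t + y * Complex.I) ^ 2)).re =
      -π * (τ.re * (t ^ 2 - y ^ 2) - τ.im * (2 * t * y)) := by
    simp only [pow_two, Complex.mul_re, Complex.mul_im, Complex.add_re, Complex.add_im, Complex.neg_re,
      Complex.neg_im, Complex.ofReal_re, Complex.ofReal_im, Complex.I_re, Complex.I_im]
    ring
  have h3 : τ.im * (t * y) ≤ |τ.im| * |t| := by
    refine (le_abs_self _).trans ?_
    rw [abs_mul, abs_mul]
    exact mul_le_mul_of_nonneg_left (mul_le_of_le_one_right (abs_nonneg _) hy) (abs_nonneg _)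
  have h4 : y ^ 2 ≤ 1 := by
    rw [← sq_abs]; exact pow_le_one₀ (abs_nonneg _) hy
  have h5 : K * |t| ≤ a * t ^ 2 + K ^ 2 / (4 * a) := by
    have : a * t ^ 2 + K ^ 2 / (4 * a) - K * |t| = (2 * a * |t| - K) ^ 2 / (4 * a) := by
      rw [← sq_abs t]; field_simp; ring
    have : 0 ≤ (2 * a * |t| - K) ^ 2 / (4 * a) := by positivity
    linarith
  have h6 : π * (τ.im * (t * y)) ≤ π * (|τ.im| * |t|) :=
    mul_le_mul_of_nonneg_left h3 Real.pi_pos.le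
  have h7 : a * y ^ 2 ≤ a * 1 := mul_le_mul_of_nonneg_left h4 ha0.le
  have h8 : π * τ.re = 2 * a := by rw [ha]; ring
  rw [h2]
  have h9 : -π * (τ.re * (t ^ 2 - y ^ 2) - τ.im * (2 * t * y)) =
      -(2 * a) * (t ^ 2 - y ^ 2) + 2 * (π * (τ.im * (t * y))) := by rw [← h8]; ring
  rw [h9]
  rw [hK] at h5 ⊢
  nlinarith

lemma mG_den_norm (w : ℂ) (s : ℝ) (hw : w = s + s * Complex.I) (t y : ℝ) :
    ‖Complex.exp (2 * (π : ℂ) * Complex.I * (w * (t + y * Complex.I)))‖ =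
      Real.exp (-(2 * π * s) * (t + y)) := by
  rw [Complex.norm_exp, hw]
  congr 1
  simp
  ring

lemma mG_den_bound (w : ℂ) (s : ℝ) (hs : 1 / 2 ≤ s) (hw : w = s + s * Complex.I) (t y : ℝ)
    (ht : 2 ≤ |t|) (hy : |y| ≤ 1) :
    1 / 2 ≤ ‖Complex.exp (2 * (π : ℂ) * Complex.I * (w * (t + y * Complex.I))) - 1‖ := by
  have h := mG_den_norm w s hw t y
  have hp := Real.pi_gt_three
  have hy' := abs_le.1 hy
  have hps : 1 ≤ 2 * π * s := by nlinarith
  have he : 2 ≤ Real.exp 1 := by have := Real.add_one_le_exp (1 : ℝ); linarith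
  rcases le_abs.1 ht with h1 | h1
  · have h2 : Real.exp (-(2 * π * s) * (t + y)) ≤ Real.exp (-1) := by
      rw [Real.exp_le_exp]; nlinarith
    have h3 : Real.exp (-1) ≤ 1 / 2 := by
      rw [Real.exp_neg, one_div]; exact inv_anti₀ (by norm_num) he
    have := norm_sub_norm_le (1 : ℂ) (Complex.exp (2 * (π : ℂ) * Complex.I * (w * (t + y * Complex.I))))
    rw [norm_sub_rev, norm_one, h] at this
    linarith
  · have h2 : Real.exp 1 ≤ Real.exp (-(2 * π * s) * (t + y)) := by
      rw [Real.exp_le_exp]; nlinarith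
    have := norm_sub_norm_le (Complex.exp (2 * (π : ℂ) * Complex.I * (w * (t + y * Complex.I)))) (1 : ℂ)
    rw [norm_one, h] at this
    linarith

lemma mG_den_ne (w : ℂ) (s : ℝ) (hs : 0 < s) (hs2 : s ^ 2 = 1 / 2)
    (hw : w = s + s * Complex.I) (z : ℂ) (h1 : -s < z.im) (h2 : z.im < 0) :
    Complex.exp (2 * (π : ℂ) * Complex.I * (w * z)) - 1 ≠ 0 := by
  intro h
  rw [sub_eq_zero, Complex.exp_eq_one_iff] at h
  obtain ⟨n, hn⟩ := h
  have h3 : w * z = n := by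
    have : (2 * (π : ℂ) * Complex.I) ≠ 0 := Complex.two_pi_I_ne_zero
    apply mul_left_cancel₀ this
    rw [hn]; ring
  have hre := congrArg Complex.re h3
  have him := congrArg Complex.im h3
  simp [hw] at hre him
  have h4 : z.re = - z.im := by
    have : s * (z.re + z.im) = 0 := by linarith
    rcases mul_eq_zero.1 this with h | h <;> linarith
  rw [h4] at hre
  have h5 : (0 : ℝ) < n := by nlinarith
  have h6 : (n : ℝ) < 1 := by nlinarith
  have h7 : 0 < n := by exact_mod_cast h5
  have h8 : n < 1 := by exact_mod_cast h6
  omega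

lemma mG_bound (x τ w : ℂ) (hτ : 0 < τ.re) (s : ℝ) (hs : 1 / 2 ≤ s) (hs2 : s ^ 2 = 1 / 2)
    (hw : w = s + s * Complex.I) :
    ∃ C : ℝ, 0 < C ∧ ∀ t y : ℝ, 2 ≤ |t| → |y| ≤ 1 →
      ‖mG x τ w (t + y * Complex.I)‖ ≤ C * Real.exp (-(π * τ.re / 2) * t ^ 2) := by
  have hw2 : w ^ 2 = Complex.I := by
    have : (s : ℂ) ^ 2 = 1 / 2 := by rw [← Complex.ofReal_pow, hs2]; norm_num
    rw [hw]
    linear_combination (1 + 2 * Complex.I + Complex.I ^ 2) * this + (1 / 2 : ℂ) * Complex.I_sq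
  obtain ⟨C, hC, h⟩ := mG_num_bound x τ w hτ hw2
  have hw0 : w ≠ 0 := by rintro rfl; simp at hw2; exact Complex.I_ne_zero hw2.symm
  have hwn : 0 < ‖w‖ := norm_pos_iff.2 hw0
  refine ⟨C * 2 * ‖w‖, by positivity, fun t y ht hy => ?_⟩
  have hd := mG_den_bound w s hs hw t y ht hy
  rw [mG, norm_mul, norm_div]
  have := h t y hy
  calc _ ≤ (C * Real.exp (-(π * τ.re / 2) * t ^ 2)) / (1 / 2) * ‖w‖ := by gcongr
    _ = _ := by ring

lemma mG_diff (x τ w : ℂ) (s : ℝ) (hs : 0 < s) (hs2 : s ^ 2 = 1 / 2)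
    (hw : w = s + s * Complex.I) (z : ℂ) (h1 : -s < z.im) (h2 : z.im < 0) :
    DifferentiableAt ℂ (mG x τ w) z := by
  have := mG_den_ne w s hs hs2 hw z h1 h2
  unfold mG
  refine DifferentiableAt.mul_const (DifferentiableAt.fun_div (𝕜 := ℂ)
    (d := fun z => Complex.exp (2 * (π : ℂ) * Complex.I * (w * z)) - 1) ?_ ?_ this) _ <;> fun_prop

lemma mG_integrable (x τ w : ℂ) (hτ : 0 < τ.re) (s : ℝ) (hs : 1 / 2 ≤ s) (hs1 : s ≤ 1)
    (hs2 : s ^ 2 = 1 / 2)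
    (hw : w = s + s * Complex.I) (y : ℝ) (h1 : -s < y) (h2 : y < 0) :
    Integrable (fun t : ℝ => mG x τ w (t + y * Complex.I)) := by
  obtain ⟨C, hC, h⟩ := mG_bound x τ w hτ s hs hs2 hw
  have hcont : Continuous (fun t : ℝ => mG x τ w (t + y * Complex.I)) := by
    rw [continuous_iff_continuousAt]
    intro t
    have h3 : ContinuousAt (mG x τ w) ((t : ℂ) + y * Complex.I) :=
      (mG_diff x τ w s (by linarith) hs2 hw _ (by simpa) (by simpa)).continuousAt
    exact ContinuousAt.comp (f := fun t : ℝ => (t : ℂ) + y * Complex.I) h3 (by fun_prop)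
  have ha : 0 < π * τ.re / 2 := by have := Real.pi_pos; positivity
  refine hcont.locallyIntegrable.integrable_of_isBigO_cocompact
    (g := fun t : ℝ => Real.exp (-(π * τ.re / 2) * t ^ 2)) ?_
    ((integrable_exp_neg_mul_sq ha).integrableAtFilter _)
  refine Asymptotics.IsBigO.of_bound C ?_
  have : ∀ᶠ t : ℝ in Filter.cocompact ℝ, 2 ≤ |t| :=
    (tendsto_norm_cocompact_atTop (E := ℝ)).eventually_ge_atTop 2
  filter_upwards [this] with t ht
  rw [Real.norm_of_nonneg (Real.exp_pos _).le]
  exact h t y ht (abs_le.2 ⟨by linarith, by linarith⟩)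

lemma mG_line_eq (x τ w : ℂ) (hτ : 0 < τ.re) (s : ℝ) (hs : 1 / 2 ≤ s) (hs1 : s ≤ 1)
    (hs2 : s ^ 2 = 1 / 2)
    (hw : w = s + s * Complex.I) (y₁ y₂ : ℝ) (h1 : -s < y₁) (h1' : y₁ < 0)
    (h2 : -s < y₂) (h2' : y₂ < 0) :
    ∫ t : ℝ, mG x τ w (t + y₁ * Complex.I) = ∫ t : ℝ, mG x τ w (t + y₂ * Complex.I) := by
  obtain ⟨C, hC, h⟩ := mG_bound x τ w hτ s hs hs2 hw
  have hmem : ∀ y ∈ uIcc y₁ y₂, -s < y ∧ y < 0 := by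
    intro y hy
    have := (convex_Ioo (-s) 0).ordConnected.uIcc_subset ⟨h1, h1'⟩ ⟨h2, h2'⟩ hy
    exact this
  have hT := Filter.tendsto_id (α := ℝ) (x := Filter.atTop)
  have l1 := intervalIntegral_tendsto_integral
    (mG_integrable x τ w hτ s hs hs1 hs2 hw y₁ h1 h1') Filter.tendsto_neg_atTop_atBot hT
  have l2 := intervalIntegral_tendsto_integral
    (mG_integrable x τ w hτ s hs hs1 hs2 hw y₂ h2 h2') Filter.tendsto_neg_atTop_atBot hT
  have ha : 0 < π * τ.re / 2 := by have := Real.pi_pos; positivity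
  have hB : Filter.Tendsto (fun T : ℝ => 2 * (C * Real.exp (-(π * τ.re / 2) * T ^ 2) * |y₂ - y₁|))
      Filter.atTop (nhds 0) := by
    have : Filter.Tendsto (fun T : ℝ => Real.exp (-(π * τ.re / 2) * T ^ 2))
        Filter.atTop (nhds 0) := by
      apply Real.tendsto_exp_atBot.comp
      exact (Filter.tendsto_pow_atTop two_ne_zero).const_mul_atTop_of_neg (by linarith)
    simpa using ((this.const_mul C).mul_const |y₂ - y₁|).const_mul 2
  have hdiff : Filter.Tendsto (fun T : ℝ => (∫ t in (-T)..(id T), mG x τ w (t + y₁ * Complex.I)) -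
      ∫ t in (-T)..(id T), mG x τ w (t + y₂ * Complex.I)) Filter.atTop (nhds 0) := by
    refine squeeze_zero_norm' ?_ hB
    filter_upwards [Filter.eventually_ge_atTop (2 : ℝ)] with T hT2
    have hR := Complex.integral_boundary_rect_eq_zero_of_differentiableOn (mG x τ w)
      (⟨-T, y₁⟩ : ℂ) (⟨T, y₂⟩ : ℂ) (by
        intro z hz
        rw [mem_reProdIm] at hz
        have := hmem z.im hz.2
        exact (mG_diff x τ w s (by linarith) hs2 hw z this.1 this.2).differentiableWithinAt)
    simp only [smul_eq_mul] at hR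
    have hv : ∀ R : ℝ, |R| = T →
        ‖∫ y in y₁..y₂, mG x τ w (R + y * Complex.I)‖ ≤
          C * Real.exp (-(π * τ.re / 2) * T ^ 2) * |y₂ - y₁| := by
      intro R hR
      apply intervalIntegral.norm_integral_le_of_norm_le_const
      intro y hy
      have := hmem y (uIoc_subset_uIcc hy)
      rw [← hR, sq_abs]
      exact h R y (by rw [hR]; exact hT2) (abs_le.2 ⟨by linarith, by linarith⟩)
    have v1 := hv T (abs_of_nonneg (by linarith))
    have v2 := hv (-T) (by rw [abs_neg]; exact abs_of_nonneg (by linarith))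
    have : (∫ t in (-T)..(id T), mG x τ w (t + y₁ * Complex.I)) -
      ∫ t in (-T)..(id T), mG x τ w (t + y₂ * Complex.I) =
      Complex.I * (∫ y in y₁..y₂, mG x τ w ((-T : ℝ) + y * Complex.I)) -
      Complex.I * (∫ y in y₁..y₂, mG x τ w ((T : ℝ) + y * Complex.I)) := by
      simp only [id]
      linear_combination hR
    rw [this]
    refine (norm_sub_le _ _).trans ?_
    rw [norm_mul, norm_mul, Complex.norm_I, one_mul, one_mul]
    linarith
  have := tendsto_nhds_unique (l1.sub l2) hdiff
  exact sub_eq_zero.1 this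

lemma mG_shift (x τ w : ℂ) (s : ℝ) (hs2 : s ^ 2 = 1 / 2) (hw : w = s + s * Complex.I) (c : ℝ) :
    (∫ t : ℝ,
      Complex.exp ((π : ℂ) * Complex.I * τ * ((c : ℂ) + w * (t : ℂ)) ^ 2 +
        2 * (π : ℂ) * Complex.I * x * ((c : ℂ) + w * (t : ℂ))) /
        (Complex.exp (2 * (π : ℂ) * Complex.I * ((c : ℂ) + w * (t : ℂ))) - 1) * w) =
    ∫ t : ℝ, mG x τ w (t + (-(s * c) : ℝ) * Complex.I) := by
  rw [← integral_add_right_eq_self (fun t : ℝ => mG x τ w (t + (-(s * c) : ℝ) * Complex.I)) (s * c)]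
  congr 1
  ext t
  have e : (c : ℂ) + w * t = w * (((t + s * c : ℝ) : ℂ) + (-(s * c) : ℝ) * Complex.I) := by
    have : (s : ℂ) ^ 2 = 1 / 2 := by rw [← Complex.ofReal_pow, hs2]; norm_num
    rw [hw]
    push_cast
    linear_combination (-(c : ℂ) * (1 - Complex.I ^ 2)) * this + (c / 2 : ℂ) * Complex.I_sq
  rw [mG, e]

/-- The value of the Mordell integral `Φ(x, τ)` does not depend on where the slope-1
integration line crosses the real axis within `(0, 1)`. -/
theorem mordellPhi_indep_of_crossing (x τ : ℂ) (hτ : 0 < τ.re) (c₁ c₂ : ℝ)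
    (hc₁ : 0 < c₁) (hc₁' : c₁ < 1) (hc₂ : 0 < c₂) (hc₂' : c₂ < 1) :
    (∫ t : ℝ,
      Complex.exp ((π : ℂ) * Complex.I * τ *
          ((c₁ : ℂ) + Complex.exp ((π : ℂ) * Complex.I / 4) * (t : ℂ)) ^ 2 +
        2 * (π : ℂ) * Complex.I * x *
          ((c₁ : ℂ) + Complex.exp ((π : ℂ) * Complex.I / 4) * (t : ℂ))) /
        (Complex.exp (2 * (π : ℂ) * Complex.I *
          ((c₁ : ℂ) + Complex.exp ((π : ℂ) * Complex.I / 4) * (t : ℂ))) - 1) *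
        Complex.exp ((π : ℂ) * Complex.I / 4)) =
    (∫ t : ℝ,
      Complex.exp ((π : ℂ) * Complex.I * τ *
          ((c₂ : ℂ) + Complex.exp ((π : ℂ) * Complex.I / 4) * (t : ℂ)) ^ 2 +
        2 * (π : ℂ) * Complex.I * x *
          ((c₂ : ℂ) + Complex.exp ((π : ℂ) * Complex.I / 4) * (t : ℂ))) /
        (Complex.exp (2 * (π : ℂ) * Complex.I *
          ((c₂ : ℂ) + Complex.exp ((π : ℂ) * Complex.I / 4) * (t : ℂ))) - 1) *
        Complex.exp ((π : ℂ) * Complex.I / 4)) := by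
  obtain ⟨s, hs⟩ : ∃ s : ℝ, s = √2 / 2 := ⟨_, rfl⟩
  have h2 : √2 ^ 2 = (2 : ℝ) := Real.sq_sqrt (by norm_num)
  have h0 : 0 ≤ √(2 : ℝ) := Real.sqrt_nonneg 2
  have hs2 : s ^ 2 = 1 / 2 := by rw [hs, div_pow, h2]; norm_num
  have hs0 : 0 ≤ s := by rw [hs]; positivity
  have hsl : 1 / 2 ≤ s := by nlinarith
  have hsu : s ≤ 1 := by nlinarith
  have hw : Complex.exp ((π : ℂ) * Complex.I / 4) = s + s * Complex.I := by
    have : (π : ℂ) * Complex.I / 4 = ((π / 4 : ℝ) : ℂ) * Complex.I := by push_cast; ring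
    rw [this, Complex.exp_mul_I, ← Complex.ofReal_cos, ← Complex.ofReal_sin, Real.cos_pi_div_four,
      Real.sin_pi_div_four, hs]
  rw [mG_shift x τ _ s hs2 hw c₁, mG_shift x τ _ s hs2 hw c₂]
  apply mG_line_eq x τ _ hτ s hsl hsu hs2 hw <;> nlinarith
end

section
/- Let τ be a complex number with Re(τ) > 0. Then the function x ↦ Φ(x, τ) is an entire function of x, i.e. it is complex differentiable at every point x ∈ ℂ (in particular, the defining integral converges for every x ∈ ℂ). -/
open scoped Real
open MeasureTheory Set Complex

lemma aux_general (b α β γ δ : ℂ) (hb : b.re < 0) (g : ℝ → ℂ) (hg : Continuous g) (M : ℝ)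
    (hM : ∀ t, ‖g t‖ ≤ M) :
    (∀ x : ℂ, Integrable (fun t : ℝ => cexp (b * t ^ 2 + (α + β * x) * t + (γ + δ * x)) * g t)) ∧
    Differentiable ℂ (fun x : ℂ =>
      ∫ t : ℝ, cexp (b * t ^ 2 + (α + β * x) * t + (γ + δ * x)) * g t) := by
  have hM0 : 0 ≤ M := (norm_nonneg _).trans (hM 0)
  have hInt : ∀ x : ℂ, Integrable
      (fun t : ℝ => cexp (b * t ^ 2 + (α + β * x) * t + (γ + δ * x)) * g t) := by
    intro x
    exact (integrable_cexp_quadratic' hb (α + β * x) (γ + δ * x)).mul_bdd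
      hg.aestronglyMeasurable (Filter.Eventually.of_forall hM)
  refine ⟨hInt, fun x₀ => ?_⟩
  let B : ℂ → ℝ → ℝ := fun k t =>
    ‖cexp (b * t ^ 2 + (α + β * x₀ + k) * t + (γ + δ * x₀ + (2 * ‖δ‖ : ℝ)))‖
  have hB : ∀ k, Integrable (B k) := fun k =>
    (integrable_cexp_quadratic' hb (α + β * x₀ + k) (γ + δ * x₀ + (2 * ‖δ‖ : ℝ))).norm
  have key := hasDerivAt_integral_of_dominated_loc_of_deriv_le (μ := (volume : Measure ℝ))
    (𝕜 := ℂ) (x₀ := x₀)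
    (F := fun (x : ℂ) (t : ℝ) => cexp (b * t ^ 2 + (α + β * x) * t + (γ + δ * x)) * g t)
    (F' := fun (x : ℂ) (t : ℝ) =>
      cexp (b * t ^ 2 + (α + β * x) * t + (γ + δ * x)) * (β * t + δ) * g t)
    (s := Metric.ball x₀ 1)
    (bound := fun t => (B ((2 * ‖β‖ : ℝ)) t + B ((-(2 * ‖β‖) : ℝ)) t) * M)
    (Metric.ball_mem_nhds _ one_pos)
    (Filter.Eventually.of_forall fun x => (hInt x).aestronglyMeasurable) (hInt x₀)
    (by
      apply Continuous.aestronglyMeasurable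
      fun_prop)
    (by
      refine Filter.Eventually.of_forall fun t x hx => ?_
      rw [norm_mul]
      refine mul_le_mul ?_ (hM t) (norm_nonneg _) (by positivity)
      have hx' : ‖x - x₀‖ ≤ 1 := by
        rw [← dist_eq_norm]; exact (Metric.mem_ball.1 hx).le
      set P : ℂ := b * t ^ 2 + (α + β * x₀) * t + (γ + δ * x₀) with hP
      have e1 : b * t ^ 2 + (α + β * x) * t + (γ + δ * x) = P + (β * t + δ) * (x - x₀) := by
        rw [hP]; ring
      have hBk : ∀ k : ℝ, B k t = Real.exp (P.re + k * t + 2 * ‖δ‖) := by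
        intro k
        have : b * t ^ 2 + (α + β * x₀ + k) * t + (γ + δ * x₀ + (2 * ‖δ‖ : ℝ))
            = P + ((k * t + 2 * ‖δ‖ : ℝ) : ℂ) := by
          rw [hP]; push_cast; ring
        simp only [B]
        rw [this, Complex.norm_exp, add_re, ofReal_re, add_assoc]
      rw [hBk, hBk, e1, norm_mul, Complex.norm_exp, add_re]
      set Q := ‖β * t + δ‖ with hQ
      have hQ1 : Q ≤ ‖β‖ * |t| + ‖δ‖ := by
        refine (norm_add_le _ _).trans ?_
        rw [norm_mul, Complex.norm_real, Real.norm_eq_abs]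
      have hQ0 : 0 ≤ Q := norm_nonneg _
      have h2 : ((β * t + δ) * (x - x₀)).re ≤ Q := by
        refine (re_le_norm _).trans ?_
        rw [norm_mul]
        exact mul_le_of_le_one_right hQ0 hx'
      have h3 : Q ≤ Real.exp Q := by linarith [Real.add_one_le_exp Q]
      calc Real.exp (P.re + ((β * t + δ) * (x - x₀)).re) * Q
          ≤ Real.exp (P.re + Q) * Real.exp Q := by gcongr
        _ = Real.exp (P.re + 2 * Q) := by rw [← Real.exp_add]; ring_nf
        _ ≤ Real.exp (P.re + 2 * ‖β‖ * t + 2 * ‖δ‖)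
            + Real.exp (P.re + -(2 * ‖β‖) * t + 2 * ‖δ‖) := by
          rcases abs_cases t with h | h
          · refine le_add_of_le_of_nonneg (Real.exp_le_exp.2 ?_) (Real.exp_pos _).le
            rw [h.1] at hQ1; linarith
          · refine le_add_of_nonneg_of_le (Real.exp_pos _).le (Real.exp_le_exp.2 ?_)
            rw [h.1] at hQ1; linarith)
    (((hB _).add (hB _)).mul_const M)
    (by
      refine Filter.Eventually.of_forall fun t x _ => ?_
      refine HasDerivAt.mul_const (HasDerivAt.cexp ?_) (g t)
      have h1 : HasDerivAt (fun x : ℂ => (α + β * x) * (t : ℂ)) (β * t) x := by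
        simpa using (((hasDerivAt_id x).const_mul β).const_add α).mul_const (t : ℂ)
      have h2 : HasDerivAt (fun x : ℂ => γ + δ * x) δ x := by
        simpa using ((hasDerivAt_id x).const_mul δ).const_add γ
      exact (h1.const_add (b * (t : ℂ) ^ 2)).add h2)
  exact key.2.differentiableAt

lemma aux_w : cexp ((π : ℂ) * I / 4) = ((√2 / 2 : ℝ) : ℂ) + ((√2 / 2 : ℝ) : ℂ) * I := by
  have : (π : ℂ) * I / 4 = ((π / 4 : ℝ) : ℂ) * I := by push_cast; ring
  rw [this, Complex.exp_mul_I, ← Complex.ofReal_cos, ← Complex.ofReal_sin, Real.cos_pi_div_four,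
    Real.sin_pi_div_four]

lemma aux_w2 : cexp ((π : ℂ) * I / 4) ^ 2 = I := by
  rw [← Complex.exp_nat_mul]
  have : ((2 : ℕ) : ℂ) * ((π : ℂ) * I / 4) = (π / 2 : ℂ) * I := by push_cast; ring
  rw [this, Complex.exp_pi_div_two_mul_I]

lemma aux_ne (c : ℝ) (hc : 0 < c) (hc' : c < 1) (t : ℝ) :
    cexp (2 * (π : ℂ) * I * ((c : ℂ) + cexp ((π : ℂ) * I / 4) * (t : ℂ))) - 1 ≠ 0 := by
  intro h
  rw [sub_eq_zero, Complex.exp_eq_one_iff] at h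
  obtain ⟨n, hn⟩ := h
  have h2 : (c : ℂ) + cexp ((π : ℂ) * I / 4) * (t : ℂ) = n := by
    have hpi : (2 * (π : ℂ) * I) ≠ 0 := Complex.two_pi_I_ne_zero
    apply mul_left_cancel₀ hpi
    rw [hn]; ring
  rw [aux_w] at h2
  have him := congrArg Complex.im h2
  have hre := congrArg Complex.re h2
  simp at him hre
  subst him
  simp at hre
  rw [hre] at hc hc'
  have h1 : (0 : ℤ) < n := by exact_mod_cast hc
  have h3 : n < (1 : ℤ) := by exact_mod_cast hc'
  omega

lemma aux_norm (c t : ℝ) :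
    ‖cexp (2 * (π : ℂ) * I * ((c : ℂ) + cexp ((π : ℂ) * I / 4) * (t : ℂ)))‖
      = Real.exp (-(√2 * π * t)) := by
  rw [Complex.norm_exp, aux_w]
  congr 1
  simp
  ring

lemma aux_bound_s13 (c : ℝ) (hc : 0 < c) (hc' : c < 1) : ∃ M : ℝ, ∀ t : ℝ,
    ‖(cexp (2 * (π : ℂ) * I * ((c : ℂ) + cexp ((π : ℂ) * I / 4) * (t : ℂ))) - 1)⁻¹‖ ≤ M := by
  have hcont : Continuous fun t : ℝ =>
      (cexp (2 * (π : ℂ) * I * ((c : ℂ) + cexp ((π : ℂ) * I / 4) * (t : ℂ))) - 1)⁻¹ :=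
    Continuous.inv₀ (by fun_prop) (aux_ne c hc hc')
  obtain ⟨M, hM⟩ := (isCompact_Icc (a := (-1 : ℝ)) (b := 1)).exists_bound_of_continuousOn
    hcont.continuousOn
  refine ⟨max M 2, fun t => ?_⟩
  by_cases ht : t ∈ Icc (-1 : ℝ) 1
  · exact (hM t ht).trans (le_max_left _ _)
  refine le_trans ?_ (le_max_right _ _)
  rw [norm_inv]
  have hn := aux_norm c t
  set z := cexp (2 * (π : ℂ) * I * ((c : ℂ) + cexp ((π : ℂ) * I / 4) * (t : ℂ)))
  refine inv_le_of_inv_le₀ (by norm_num) ?_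
  have hk : 1 ≤ √2 * π := by
    have : 1 ≤ √2 := Real.one_le_sqrt.2 (by norm_num)
    nlinarith [Real.pi_gt_three]
  have habs := abs_norm_sub_norm_le z 1
  rw [norm_one, hn] at habs
  refine le_trans ?_ habs
  have ht' : t < -1 ∨ 1 < t := by
    by_contra! h
    exact ht h
  rcases ht' with h | h
  · have h1 := Real.add_one_le_exp (-(√2 * π * t))
    have h2 : 1 ≤ -(√2 * π * t) := by nlinarith
    refine le_trans ?_ (le_abs_self _)
    norm_num; linarith
  · have h1 := Real.add_one_le_exp (√2 * π * t)
    have h2 : 1 ≤ (√2 * π * t) := by nlinarith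
    have h3 : Real.exp (-(√2 * π * t)) ≤ 2⁻¹ := by
      rw [Real.exp_neg]
      exact inv_anti₀ (by norm_num) (by linarith)
    refine le_trans ?_ (neg_le_abs _)
    norm_num at h3 ⊢; linarith

/-- For `Re τ > 0`, the Mordell integral `Φ(x, τ)` is an entire function of `x`;
in particular the defining integral converges for every `x ∈ ℂ`. -/
theorem mordellPhi_entire (τ : ℂ) (hτ : 0 < τ.re) (c : ℝ) (hc : 0 < c) (hc' : c < 1) :
    Differentiable ℂ (fun x : ℂ => mordellPhi x τ c) ∧
    ∀ x : ℂ, MeasureTheory.Integrable (fun t : ℝ =>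
      (Complex.exp ((π : ℂ) * Complex.I * τ *
          ((c : ℂ) + Complex.exp ((π : ℂ) * Complex.I / 4) * (t : ℂ)) ^ 2 +
          2 * (π : ℂ) * Complex.I * x *
            ((c : ℂ) + Complex.exp ((π : ℂ) * Complex.I / 4) * (t : ℂ))) /
        (Complex.exp (2 * (π : ℂ) * Complex.I *
          ((c : ℂ) + Complex.exp ((π : ℂ) * Complex.I / 4) * (t : ℂ))) - 1)) *
        Complex.exp ((π : ℂ) * Complex.I / 4)) := by
  obtain ⟨M, hM⟩ := aux_bound_s13 c hc hc'
  set w := cexp ((π : ℂ) * I / 4) with hw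
  have hw2 : w ^ 2 = I := aux_w2
  have hcont : Continuous fun t : ℝ => (cexp (2 * (π : ℂ) * I * ((c : ℂ) + w * (t : ℂ))) - 1)⁻¹ :=
    Continuous.inv₀ (by fun_prop) (aux_ne c hc hc')
  have key := aux_general (-(π * τ)) (2 * π * I * τ * c * w) (2 * π * I * w)
    (π * I * τ * c ^ 2) (2 * π * I * c)
    (by simpa using mul_pos Real.pi_pos hτ)
    (fun t : ℝ => (cexp (2 * (π : ℂ) * I * ((c : ℂ) + w * (t : ℂ))) - 1)⁻¹ * w)
    (hcont.mul continuous_const) (M * ‖w‖)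
    (fun t => by
      rw [norm_mul]
      exact mul_le_mul_of_nonneg_right (hM t) (norm_nonneg _))
  have heq : ∀ (x : ℂ) (t : ℝ),
      cexp (-(π * τ) * t ^ 2 + (2 * π * I * τ * c * w + 2 * π * I * w * x) * t +
        (π * I * τ * c ^ 2 + 2 * π * I * c * x)) *
        ((cexp (2 * (π : ℂ) * I * ((c : ℂ) + w * (t : ℂ))) - 1)⁻¹ * w) =
      cexp (π * I * τ * (c + w * t) ^ 2 + 2 * π * I * x * (c + w * t)) /
        (cexp (2 * π * I * (c + w * t)) - 1) * w := by
    intro x t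
    have he : -(π * τ) * t ^ 2 + (2 * π * I * τ * c * w + 2 * π * I * w * x) * t +
        (π * I * τ * c ^ 2 + 2 * π * I * c * x) =
        π * I * τ * (c + w * t) ^ 2 + 2 * π * I * x * (c + w * t) := by
      linear_combination (-(π * I * τ * t ^ 2 : ℂ)) * hw2 - (π * τ * t ^ 2 : ℂ) * I_sq
    rw [he, div_eq_mul_inv]
    exact (mul_assoc _ _ _).symm
  simp only [heq] at key
  refine ⟨?_, key.1⟩
  have hw' : cexp (((π / 4 : ℝ) : ℂ) * I) = w := by
    rw [hw]; congr 1; push_cast; ring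
  simp only [mordellPhi, lineInt, hw']
  exact key.2
end
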